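/- arXiv:2111.11792 — 6 statements merged into one kernel-verified Lean document; each statement's English description precedes it below -/
import Mathlib

section
/- Let d and ζ be real numbers with 0 < ζ < 1 and max(2ζ−2, −2ζ) < d < 0. Then the series ∑_{n≥0} D_n(d)·(ψ(n + d/2 + ζ) + ψ(n + d/2 − ζ)) converges absolutely, and one half of its sum equals −ζ·(sin(πζ)/sin(πd/2))·Γ(d/2 − ζ)·Γ(d/2 + ζ)/Γ(1 + d). (This is the derivative with respect to ζ of the regularized sphere free energy of a generalized free field.) -/
open Real

/-- The analytically continued degeneracy of spherical harmonics on `S^d`. -/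
noncomputable def sphereDegeneracy (d : ℝ) (n : ℕ) : ℝ :=
  Real.Gamma ((n : ℝ) + d - 1) * (2 * (n : ℝ) + d - 1) /
    (Real.Gamma ((n : ℝ) + 1) * Real.Gamma d)

/-- The digamma function `ψ = Γ′/Γ`. -/
noncomputable def digamma (x : ℝ) : ℝ := deriv Real.Gamma x / Real.Gamma x

/-!
Let `c n = multichoose d n` be the coefficients of `(1 - t) ^ (-d)`. The degeneracies are
`D (n + 1) = c (n + 1) + c n`, with partial sums `(2 * N + d) / d * c N`. Write `d = α + β` with
`α = d / 2 + ζ` and `β = d / 2 - ζ`. Summation by parts replaces `ψ (n + α) + ψ (n + β)` by its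
increments `1 / (n + α) + 1 / (n + β)`, and the new summand splits into multiples of `c n`,
`c n / (n + α)` and `c n / (n + β)`. For `d < 0` the first series sums to `0` and the other two
to Beta values `B(a, 1 - d)`: for `a > 0` by integrating `t ^ (a - 1) * (1 - t) ^ (-d)` termwise,
and for other `a` by the functional equation of the Beta function. The reflection formula turns
the difference of the two Beta values into a difference of sines.
-/

open Filter Topology Asymptotics MeasureTheory Set
open Ring (multichoose)
open ProbabilityTheory (beta)

theorem hasSum_smul_by_parts {R M : Type*} [Ring R] [AddCommGroup M] [Module R M]
    [TopologicalSpace M] [IsTopologicalAddGroup M] [T2Space M] {f : ℕ → R} {g : ℕ → M} {s : M}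
    (hfg : Summable fun n => f n • g n)
    (hbdry : Tendsto (fun n => f n • ∑ i ∈ Finset.range (n + 1), g i) atTop (𝓝 0))
    (hparts : HasSum (fun n => (f (n + 1) - f n) • ∑ i ∈ Finset.range (n + 1), g i) s) :
    HasSum (fun n => f n • g n) (-s) := by
  have partial_sums := hbdry.sub hparts.tendsto_sum_nat
  have by_parts (n : ℕ) := Finset.sum_range_by_parts f g (n + 1)
  simp only [Nat.add_sub_cancel] at by_parts
  simp only [← by_parts, zero_sub] at partial_sums
  have hsum := (tendsto_add_atTop_iff_nat 1).mpr hfg.hasSum.tendsto_sum_nat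
  rw [← tendsto_nhds_unique hsum partial_sums]
  exact hfg.hasSum

theorem ne_neg_natCast {x : ℝ} (hx : -1 < x) (hx0 : x ≠ 0) (m : ℕ) : x ≠ -m := by
  rintro rfl
  have hm : m < 1 := by exact_mod_cast neg_lt_neg_iff.mp hx
  exact hx0 (by simp [Nat.lt_one_iff.mp hm])

theorem isBigO_natCast_add_const (c : ℝ) : (fun n : ℕ => (n : ℝ) + c) =O[atTop] fun n => (n : ℝ) :=
  (isBigO_refl _ _).add (isLittleO_const_left.mpr
    (Or.inr (tendsto_norm_atTop_atTop.comp tendsto_natCast_atTop_atTop))).isBigO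

section BinomialRing

variable {R : Type*} [CommRing R] [BinomialRing R]

theorem factorial_mul_multichoose (r : R) (n : ℕ) :
    (n.factorial : R) * multichoose r n = ∏ j ∈ Finset.range n, (r + j) := by
  rw [← nsmul_eq_mul, Ring.factorial_nsmul_multichoose_eq_ascPochhammer,
    Polynomial.ascPochhammer_smeval_eq_eval]
  induction n with
  | zero => simp
  | succ n ih => rw [ascPochhammer_succ_eval, ih, Finset.prod_range_succ]

theorem succ_mul_multichoose_succ (r : R) (n : ℕ) :
    ((n : R) + 1) * multichoose r (n + 1) = (r + n) * multichoose r n := by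
  have := BinomialRing.toIsAddTorsionFree (R := R)
  refine nsmul_right_injective n.factorial_ne_zero ?_
  simp only [nsmul_eq_mul]
  have hsucc := factorial_mul_multichoose r (n + 1)
  rw [Finset.prod_range_succ, ← factorial_mul_multichoose, Nat.factorial_succ] at hsucc
  push_cast at hsucc
  linear_combination hsucc

theorem sum_range_multichoose (r : R) (n : ℕ) :
    ∑ i ∈ Finset.range (n + 1), multichoose r i = multichoose (r + 1) n := by
  induction n with
  | zero => simp
  | succ n ih => rw [Finset.sum_range_succ, ih, Ring.multichoose_succ_succ, add_comm]

end BinomialRing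

theorem hasSum_multichoose_mul_pow (d : ℝ) {t : ℝ} (ht : |t| < 1) :
    HasSum (fun n => multichoose d n * t ^ n) ((1 - t) ^ (-d)) := by
  have hmem : t ∈ Metric.eball (0 : ℝ) 1 := by
    rw [← ENNReal.ofReal_one, Metric.eball_ofReal]
    simpa using ht
  have hseries := (Real.one_div_one_sub_rpow_hasFPowerSeriesOnBall_zero d).hasSum hmem
  simpa only [FormalMultilinearSeries.ofScalars_apply_eq, ← Ring.multichoose_eq, smul_eq_mul,
    zero_add, one_div, ← Real.rpow_neg (sub_nonneg.mpr (le_of_abs_le ht.le))] using hseries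

theorem tendsto_multichoose_mul_rpow {d : ℝ} (hd : ∀ m : ℕ, d ≠ -m) :
    Tendsto (fun n : ℕ => multichoose d n * (n : ℝ) ^ (1 - d)) atTop (𝓝 (Gamma d)⁻¹) := by
  have hratio : Tendsto (fun n : ℕ => (n : ℝ) / (n + d)) atTop (𝓝 1) := by
    simpa [add_comm] using tendsto_add_mul_div_add_mul_atTop_nhds (0 : ℝ) d 1 one_ne_zero
  have hlim := ((Real.GammaSeq_tendsto_Gamma d).inv₀ (Gamma_ne_zero hd)).mul hratio
  rw [mul_one] at hlim
  refine hlim.congr' ?_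
  filter_upwards [eventually_gt_atTop 0] with n hn
  have hn' : (0 : ℝ) < n := Nat.cast_pos.mpr hn
  have hnd : (n : ℝ) + d ≠ 0 := fun h => hd n (by linarith)
  have hfact : (n.factorial : ℝ) ≠ 0 := Nat.cast_ne_zero.mpr n.factorial_ne_zero
  rw [Real.GammaSeq, Finset.prod_range_succ, ← factorial_mul_multichoose, inv_div,
    Real.rpow_sub hn', Real.rpow_one, add_comm d]
  field_simp

theorem multichoose_isBigO_rpow (d : ℝ) :
    (fun n => multichoose d n) =O[atTop] fun n : ℕ => (n : ℝ) ^ (d - 1) := by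
  by_cases hd : ∀ m : ℕ, d ≠ -m
  · refine ((tendsto_multichoose_mul_rpow hd).isBigO_one ℝ).mul
      (isBigO_refl (fun n : ℕ => (n : ℝ) ^ (d - 1)) atTop) |>.congr' ?_ (by simp)
    filter_upwards [eventually_gt_atTop 0] with n hn
    rw [mul_assoc, ← Real.rpow_add (Nat.cast_pos.mpr hn), sub_add_sub_cancel, sub_self,
      Real.rpow_zero, mul_one]
  · push Not at hd
    obtain ⟨m, rfl⟩ := hd
    refine (isBigO_zero _ _).congr' ?_ EventuallyEq.rfl
    filter_upwards [eventually_gt_atTop m] with n hn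
    have := Ring.map_multichoose (Int.castRingHom ℝ) (-(m : ℤ)) n
    simpa [Ring.multichoose_neg_of_lt m n hn] using this

theorem tendsto_natCast_rpow_atTop_zero {s : ℝ} (hs : s < 0) :
    Tendsto (fun n : ℕ => (n : ℝ) ^ s) atTop (𝓝 0) := by
  simpa [Function.comp_def] using
    (tendsto_rpow_neg_atTop (neg_pos.mpr hs)).comp tendsto_natCast_atTop_atTop

theorem summable_multichoose {d : ℝ} (hd : d < 0) : Summable (multichoose d) :=
  summable_of_isBigO_nat (Real.summable_nat_rpow.mpr (by linarith)) (multichoose_isBigO_rpow d)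

theorem hasSum_multichoose_zero {d : ℝ} (hd : d < 0) : HasSum (multichoose d) 0 := by
  rw [(summable_multichoose hd).hasSum_iff_tendsto_nat, ← tendsto_add_atTop_iff_nat 1]
  simp only [sum_range_multichoose]
  refine (multichoose_isBigO_rpow (d + 1)).trans_tendsto ?_
  simpa using tendsto_natCast_rpow_atTop_zero hd

theorem Gamma_natCast_add_eq_multichoose {d : ℝ} (hd : ∀ m : ℕ, d ≠ -m) (n : ℕ) :
    Gamma (n + d) = n.factorial * multichoose d n * Gamma d := by
  rw [factorial_mul_multichoose]
  induction n with
  | zero => simp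
  | succ n ih =>
    have hne : (n : ℝ) + d ≠ 0 := fun h => hd n (by linarith)
    rw [Nat.cast_succ, add_right_comm, Real.Gamma_add_one hne, ih, Finset.prod_range_succ]
    ring

theorem beta_eq_setIntegral {a b : ℝ} (ha : 0 < a) (hb : 0 < b) :
    beta a b = ∫ t in Ioo (0 : ℝ) 1, t ^ (a - 1) * (1 - t) ^ (b - 1) := by
  rw [ProbabilityTheory.beta_eq_betaIntegralReal a b ha hb, Complex.betaIntegral,
    intervalIntegral.integral_of_le zero_le_one, integral_Ioc_eq_integral_Ioo,
    ← Complex.ofReal_re (∫ t in Ioo (0 : ℝ) 1, t ^ (a - 1) * (1 - t) ^ (b - 1)),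
    ← integral_complex_ofReal]
  congr 1
  refine setIntegral_congr_fun measurableSet_Ioo fun t ht => ?_
  simp only [Complex.ofReal_mul, Complex.ofReal_cpow ht.1.le,
    Complex.ofReal_cpow (sub_nonneg.mpr ht.2.le), Complex.ofReal_sub, Complex.ofReal_one]

theorem mul_beta_eq_add_mul_beta_add_one {a : ℝ} (ha : a ≠ 0) (b : ℝ) :
    a * beta a b = (a + b) * beta (a + 1) b := by
  rw [beta, beta, Gamma_add_one ha, add_right_comm]
  rcases eq_or_ne (a + b) 0 with hab | hab
  · simp [hab]
  · rw [Gamma_add_one hab]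
    field_simp

theorem inv_Gamma_one_sub {x : ℝ} (hx : ∀ m : ℕ, x ≠ -m) :
    (Gamma (1 - x))⁻¹ = Gamma x * sin (π * x) / π := by
  have hinv := congrArg (·⁻¹) (Real.Gamma_mul_Gamma_one_sub x)
  simp only [mul_inv, inv_div] at hinv
  rw [inv_mul_eq_iff_eq_mul₀ (Gamma_ne_zero hx)] at hinv
  rw [hinv, mul_div_assoc]

theorem setIntegral_Ioo_rpow_sub_one {s : ℝ} (hs : 0 < s) :
    ∫ t in Ioo (0 : ℝ) 1, t ^ (s - 1) = 1 / s := by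
  rw [← integral_Ioc_eq_integral_Ioo, ← intervalIntegral.integral_of_le zero_le_one,
    integral_rpow (Or.inl (by linarith)), sub_add_cancel, one_rpow, zero_rpow hs.ne', sub_zero]

theorem hasSum_multichoose_div_of_pos {d a : ℝ} (hd : d < 0) (ha : 0 < a) :
    HasSum (fun n : ℕ => multichoose d n / (n + a)) (beta a (1 - d)) := by
  have hpos (n : ℕ) : 0 < n + a := by positivity
  have hintegrable (n : ℕ) : IntegrableOn (fun t : ℝ => t ^ (n + a - 1)) (Ioo 0 1) :=
    (intervalIntegrable_iff_integrableOn_Ioo_of_le zero_le_one).mp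
      (intervalIntegral.intervalIntegrable_rpow' (by linarith [hpos n]))
  have hnorm (n : ℕ) : ∫ t in Ioo (0 : ℝ) 1, ‖multichoose d n * t ^ (n + a - 1)‖ =
      |multichoose d n| * (1 / (n + a)) := by
    rw [← setIntegral_Ioo_rpow_sub_one (hpos n), ← integral_const_mul]
    refine setIntegral_congr_fun measurableSet_Ioo fun t ht => ?_
    simp only [norm_mul, norm_eq_abs, abs_of_nonneg (rpow_nonneg ht.1.le _)]
  have hsummable : Summable fun n : ℕ =>
      ∫ t in Ioo (0 : ℝ) 1, ‖multichoose d n * t ^ (n + a - 1)‖ := by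
    simp only [hnorm]
    refine ((summable_multichoose hd).abs.mul_right (1 / a)).of_nonneg_of_le
      (fun n => by positivity [hpos n]) fun n => ?_
    gcongr
    simp
  have hseries : ∫ t in Ioo (0 : ℝ) 1, ∑' n : ℕ, multichoose d n * t ^ (n + a - 1) =
      beta a (1 - d) := by
    rw [beta_eq_setIntegral ha (by linarith)]
    refine setIntegral_congr_fun measurableSet_Ioo fun t ht => ?_
    have ht' : |t| < 1 := by rw [abs_of_pos ht.1]; exact ht.2
    simp only [sub_sub_cancel_left, ← (hasSum_multichoose_mul_pow d ht').tsum_eq, ← tsum_mul_left]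
    refine tsum_congr fun n => ?_
    rw [add_sub_assoc, rpow_add ht.1, rpow_natCast]
    ring
  have hsum := hasSum_integral_of_summable_integral_norm
    (fun n => (hintegrable n).const_mul (multichoose d n)) hsummable
  simpa only [hseries, integral_const_mul, setIntegral_Ioo_rpow_sub_one (hpos _),
    mul_one_div] using hsum

theorem hasSum_multichoose_div_of_add_one {d a s : ℝ} (hd : d < 0) (ha : ∀ m : ℕ, a ≠ -m)
    (hs : HasSum (fun n : ℕ => multichoose d n / (n + (a + 1))) s) :
    HasSum (fun n : ℕ => multichoose d n / (n + a)) ((a + 1 - d) * s / a) := by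
  have hna (n : ℕ) : (n : ℝ) + a ≠ 0 := fun h => ha n (by linarith)
  have ha0 : a ≠ 0 := by simpa using ha 0
  have hzero := hasSum_multichoose_zero hd
  -- The shift `n ↦ n + 1` and `(n + 1) * c (n + 1) = (n + d) * c n` replace `a` by `a + 1`.
  have hmoment : HasSum (fun n : ℕ => multichoose d n * (n / (n + a))) (-((a + 1 - d) * s)) := by
    rw [← hasSum_nat_add_iff' 1]
    convert hzero.sub (hs.mul_left (a + 1 - d)) using 1
    · funext n
      have hna1 : (n : ℝ) + (a + 1) ≠ 0 := by
        simpa [add_assoc, add_comm 1 a] using hna (n + 1)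
      have hrec := succ_mul_multichoose_succ d n
      rw [Nat.cast_succ, add_right_comm, add_assoc]
      field_simp
      linear_combination hrec
    · simp
  have hterm (n : ℕ) : multichoose d n / (n + a) =
      a⁻¹ * (multichoose d n - multichoose d n * (n / (n + a))) := by
    have := hna n
    field_simp
    ring
  have hquot := (hzero.sub hmoment).mul_left a⁻¹
  rw [zero_sub, neg_neg, ← div_eq_inv_mul] at hquot
  exact hquot.congr_fun hterm

theorem hasSum_multichoose_div {d a : ℝ} (hd : d < 0) (ha : ∀ m : ℕ, a ≠ -m) :
    HasSum (fun n : ℕ => multichoose d n / (n + a)) (beta a (1 - d)) := by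
  obtain ⟨k, hk⟩ := exists_nat_gt (-a)
  induction k generalizing a with
  | zero => exact hasSum_multichoose_div_of_pos hd (by simpa using hk)
  | succ k ih =>
    have ha0 : a ≠ 0 := by simpa using ha 0
    have ha1 (m : ℕ) : a + 1 ≠ -m := fun h => ha (m + 1) (by push_cast; linarith)
    have hstep := hasSum_multichoose_div_of_add_one hd ha
      (ih ha1 (by push_cast at hk; linarith))
    rwa [add_sub_assoc, ← mul_beta_eq_add_mul_beta_add_one ha0, mul_div_cancel_left₀ _ ha0] at hstep

theorem digamma_add_one {x : ℝ} (hx : ∀ m : ℕ, x ≠ -m) : digamma (x + 1) = digamma x + 1 / x := by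
  have hx0 : x ≠ 0 := by simpa using hx 0
  have hΓ : Gamma x ≠ 0 := Gamma_ne_zero hx
  have heq : (fun y => Gamma (y + 1)) =ᶠ[𝓝 x] fun y => y * Gamma y := by
    filter_upwards [eventually_ne_nhds hx0] with y hy using Gamma_add_one hy
  have hderiv := heq.deriv_eq
  rw [deriv_comp_add_const, deriv_fun_mul differentiableAt_fun_id (differentiableAt_Gamma hx),
    deriv_id''] at hderiv
  rw [digamma, digamma, hderiv, Gamma_add_one hx0]
  field_simp
  ring

theorem digamma_natCast_succ_add_sub {a : ℝ} (ha : ∀ m : ℕ, a ≠ -m) (n : ℕ) :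
    digamma ((n + 1 : ℕ) + a) - digamma (n + a) = 1 / (n + a) := by
  have hna (m : ℕ) : n + a ≠ -m := fun h => ha (n + m) (by push_cast; linarith)
  rw [Nat.cast_succ, add_right_comm, digamma_add_one hna, add_sub_cancel_left]

theorem hasDerivAt_log_Gamma {x : ℝ} (hx : 0 < x) :
    HasDerivAt (log ∘ Gamma) (digamma x) x :=
  (differentiableAt_Gamma (ne_neg_natCast (by linarith) hx.ne')).hasDerivAt.log
    (Gamma_pos_of_pos hx).ne'

theorem slope_log_Gamma_add_one {x : ℝ} (hx : 0 < x) :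
    slope (log ∘ Gamma) x (x + 1) = log x := by
  simp [slope_def_field, Gamma_add_one hx.ne', log_mul hx.ne' (Gamma_pos_of_pos hx).ne']

theorem digamma_le_log {x : ℝ} (hx : 0 < x) : digamma x ≤ log x := by
  rw [← slope_log_Gamma_add_one hx]
  exact convexOn_log_Gamma.le_slope_of_hasDerivAt hx (add_pos hx one_pos) (lt_add_one x)
    (hasDerivAt_log_Gamma hx)

theorem log_sub_one_div_le_digamma {x : ℝ} (hx : 0 < x) : log x - 1 / x ≤ digamma x := by
  rw [sub_le_iff_le_add, ← digamma_add_one (ne_neg_natCast (by linarith) hx.ne'),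
    ← slope_log_Gamma_add_one hx]
  exact convexOn_log_Gamma.slope_le_of_hasDerivAt hx (add_pos hx one_pos) (lt_add_one x)
    (hasDerivAt_log_Gamma (add_pos hx one_pos))

theorem digamma_isBigO_log : digamma =O[atTop] log := by
  refine IsBigO.of_bound 1 ?_
  filter_upwards [eventually_ge_atTop (exp 1)] with x hx
  have hx1 : 1 ≤ x := (one_le_exp zero_le_one).trans hx
  have hlog : 1 ≤ log x := (le_log_iff_exp_le (by linarith)).mpr hx
  have hinv : 1 / x ≤ 1 := (div_le_one (by linarith)).mpr hx1
  have hlower := log_sub_one_div_le_digamma (x := x) (by linarith)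
  rw [one_mul, norm_of_nonneg (by linarith), norm_of_nonneg (by linarith)]
  exact digamma_le_log (by linarith)

theorem digamma_natCast_add_isLittleO_rpow (a : ℝ) {ε : ℝ} (hε : 0 < ε) :
    (fun n : ℕ => digamma (n + a)) =o[atTop] fun n : ℕ => (n : ℝ) ^ ε := by
  have hshift : Tendsto (fun n : ℕ => (n : ℝ) + a) atTop atTop :=
    tendsto_atTop_add_const_right _ a tendsto_natCast_atTop_atTop
  exact ((digamma_isBigO_log.trans_isLittleO (isLittleO_log_rpow_atTop hε)).comp_tendsto
    hshift).trans_isBigO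
      ((isBigO_natCast_add_const a).rpow hε.le (.of_forall fun n => n.cast_nonneg))

theorem multichoose_mul_digamma_isLittleO_rpow {d s : ℝ} (hs : d - 1 < s) (a : ℝ) :
    (fun n : ℕ => multichoose d n * digamma (n + a)) =o[atTop] fun n : ℕ => (n : ℝ) ^ s := by
  refine ((multichoose_isBigO_rpow d).mul_isLittleO
    (digamma_natCast_add_isLittleO_rpow a (sub_pos.mpr hs))).congr' EventuallyEq.rfl ?_
  filter_upwards [eventually_gt_atTop 0] with n hn
  rw [← rpow_add (Nat.cast_pos.mpr hn), add_sub_cancel]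

theorem summable_multichoose_mul_digamma {d : ℝ} (hd : d < 0) (a : ℝ) :
    Summable fun n : ℕ => multichoose d n * digamma (n + a) :=
  summable_of_isBigO_nat (summable_nat_rpow.mpr (by linarith : d / 2 - 1 < -1))
    (multichoose_mul_digamma_isLittleO_rpow (by linarith) a).isBigO

theorem sphereDegeneracy_zero {d : ℝ} (hd : ∀ m : ℕ, d ≠ -m) (hd1 : d ≠ 1) :
    sphereDegeneracy d 0 = 1 := by
  have hΓ := Gamma_add_one (sub_ne_zero.mpr hd1)
  rw [sub_add_cancel] at hΓ
  have := Gamma_ne_zero hd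
  simp only [sphereDegeneracy, Nat.cast_zero, zero_add, mul_zero, Gamma_one, one_mul]
  rw [mul_comm, ← hΓ, div_self this]

theorem sphereDegeneracy_succ {d : ℝ} (hd : ∀ m : ℕ, d ≠ -m) (n : ℕ) :
    sphereDegeneracy d (n + 1) = multichoose d (n + 1) + multichoose d n := by
  have hΓ := Gamma_ne_zero hd
  have hfact : (n.factorial : ℝ) ≠ 0 := Nat.cast_ne_zero.mpr n.factorial_ne_zero
  have hn : (n : ℝ) + 1 ≠ 0 := n.cast_add_one_ne_zero
  rw [sphereDegeneracy, Nat.cast_succ, Gamma_add_one hn, Gamma_nat_eq_factorial,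
    show (n : ℝ) + 1 + d - 1 = n + d by ring, Gamma_natCast_add_eq_multichoose hd]
  field_simp
  linear_combination -(succ_mul_multichoose_succ d n)

theorem sum_range_sphereDegeneracy {d : ℝ} (hd : ∀ m : ℕ, d ≠ -m) (hd1 : d ≠ 1) (N : ℕ) :
    ∑ n ∈ Finset.range (N + 1), sphereDegeneracy d n = (2 * N + d) / d * multichoose d N := by
  have hd0 : d ≠ 0 := by simpa using hd 0
  induction N with
  | zero => simp [sphereDegeneracy_zero hd hd1, hd0]
  | succ N ih =>
    rw [Finset.sum_range_succ, ih, sphereDegeneracy_succ hd]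
    push_cast
    field_simp
    linear_combination -2 * succ_mul_multichoose_succ d N

theorem summable_sphereDegeneracy_mul_digamma {d : ℝ} (hd : d < 0) (hdn : ∀ m : ℕ, d ≠ -m)
    (a : ℝ) : Summable fun n : ℕ => sphereDegeneracy d n * digamma (n + a) := by
  rw [← summable_nat_add_iff 1]
  convert ((summable_nat_add_iff 1).mpr (summable_multichoose_mul_digamma hd a)).add
    (summable_multichoose_mul_digamma hd (a + 1)) using 2 with n
  rw [sphereDegeneracy_succ hdn, add_mul, Nat.cast_succ, add_right_comm, add_assoc]

theorem tendsto_digamma_mul_sum_sphereDegeneracy {d : ℝ} (hd : d < 0) (hdn : ∀ m : ℕ, d ≠ -m)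
    (a : ℝ) : Tendsto (fun N : ℕ => digamma (N + a) *
      ∑ n ∈ Finset.range (N + 1), sphereDegeneracy d n) atTop (𝓝 0) := by
  have hlin : (fun N : ℕ => (2 * N + d) / d) =O[atTop] fun N => (N : ℝ) :=
    ((isBigO_natCast_add_const (d / 2)).const_mul_left (2 / d)).congr_left fun N => by ring
  have hprod := hlin.mul_isLittleO
    (multichoose_mul_digamma_isLittleO_rpow (by linarith : d - 1 < -1) a)
  refine (isLittleO_one_iff ℝ).mp (hprod.congr' (.of_forall fun N => ?_) ?_)
  · beta_reduce
    rw [sum_range_sphereDegeneracy hdn (by linarith)]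
    ring
  · filter_upwards [eventually_gt_atTop 0] with N hN
    rw [rpow_neg_one, mul_inv_cancel₀ (Nat.cast_ne_zero.mpr hN.ne')]

theorem hasSum_one_div_add_one_div_mul_sum_sphereDegeneracy {α β : ℝ} (hd : α + β < 0)
    (hdn : ∀ m : ℕ, α + β ≠ -m) (hα : ∀ m : ℕ, α ≠ -m) (hβ : ∀ m : ℕ, β ≠ -m) :
    HasSum (fun n : ℕ => (1 / (n + α) + 1 / (n + β)) *
        ∑ i ∈ Finset.range (n + 1), sphereDegeneracy (α + β) i)
      ((α - β) / (α + β) * (beta β (1 - (α + β)) - beta α (1 - (α + β)))) := by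
  have hbeta := ((hasSum_multichoose_div hd hβ).sub (hasSum_multichoose_div hd hα)).mul_left
    ((α - β) / (α + β))
  have hsum := ((hasSum_multichoose_zero hd).mul_left (4 / (α + β))).add hbeta
  rw [mul_zero, zero_add] at hsum
  refine hsum.congr_fun fun n => ?_
  have hnα : (n : ℝ) + α ≠ 0 := fun h => hα n (by linarith)
  have hnβ : (n : ℝ) + β ≠ 0 := fun h => hβ n (by linarith)
  have hd0 := hd.ne
  rw [sum_range_sphereDegeneracy hdn (by linarith)]
  field_simp
  ring

theorem hasSum_sphereDegeneracy_mul_digamma {α β : ℝ} (hd : α + β < 0)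
    (hdn : ∀ m : ℕ, α + β ≠ -m) (hα : ∀ m : ℕ, α ≠ -m) (hβ : ∀ m : ℕ, β ≠ -m) :
    HasSum (fun n : ℕ => sphereDegeneracy (α + β) n * (digamma (n + α) + digamma (n + β)))
      ((α - β) / (α + β) * (beta α (1 - (α + β)) - beta β (1 - (α + β)))) := by
  have hsummable := (summable_sphereDegeneracy_mul_digamma hd hdn α).add
    (summable_sphereDegeneracy_mul_digamma hd hdn β)
  have hbdry := (tendsto_digamma_mul_sum_sphereDegeneracy hd hdn α).add
    (tendsto_digamma_mul_sum_sphereDegeneracy hd hdn β)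
  have hparts := hasSum_one_div_add_one_div_mul_sum_sphereDegeneracy hd hdn hα hβ
  simp only [← add_mul, add_zero, mul_comm (sphereDegeneracy _ _)] at hsummable hbdry
  simp only [← digamma_natCast_succ_add_sub hα, ← digamma_natCast_succ_add_sub hβ,
    ← add_sub_add_comm] at hparts
  have hsum := hasSum_smul_by_parts (f := fun n : ℕ => digamma (n + α) + digamma (n + β))
    (g := sphereDegeneracy (α + β)) hsummable hbdry hparts
  rw [← mul_neg, neg_sub] at hsum
  exact hsum.congr_fun fun n => mul_comm _ _

theorem beta_one_sub_add (a : ℝ) {b : ℝ} (hb : ∀ m : ℕ, b ≠ -m) :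
    beta a (1 - (a + b)) = Gamma a * Gamma b * Gamma (1 - (a + b)) * sin (π * b) / π := by
  rw [beta, show a + (1 - (a + b)) = 1 - b by ring, div_eq_mul_inv, inv_Gamma_one_sub hb]
  ring

theorem beta_sub_beta_one_sub_add {a b : ℝ} (ha : ∀ m : ℕ, a ≠ -m) (hb : ∀ m : ℕ, b ≠ -m) :
    beta a (1 - (a + b)) - beta b (1 - (a + b)) =
      -2 * sin (π * ((a - b) / 2)) * cos (π * (a + b) / 2) / π *
        (Gamma a * Gamma b * Gamma (1 - (a + b))) := by
  have hsin := sin_sub_sin (π * a) (π * b)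
  rw [← mul_sub, ← mul_add, mul_div_assoc π (a - b)] at hsin
  rw [beta_one_sub_add a hb, add_comm a b, beta_one_sub_add b ha, add_comm b a]
  linear_combination -(Gamma a * Gamma b * Gamma (1 - (a + b)) / π) * hsin

theorem Gamma_one_sub_mul_cos {x : ℝ} (hx : ∀ k : ℤ, x ≠ k) :
    Gamma (1 - x) * cos (π * x / 2) / π = (2 * sin (π * x / 2) * Gamma x)⁻¹ := by
  have hsin : sin (π * x) = 2 * sin (π * x / 2) * cos (π * x / 2) := by
    rw [← sin_two_mul, mul_div_cancel₀ _ two_ne_zero]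
  have hsin0 : sin (π * x) ≠ 0 := fun h => by
    obtain ⟨k, hk⟩ := sin_eq_zero_iff.mp h
    exact hx k (mul_left_cancel₀ pi_ne_zero (by linarith))
  have hrefl := Gamma_mul_Gamma_one_sub x
  rw [eq_div_iff hsin0, hsin] at hrefl
  refine eq_inv_of_mul_eq_one_left ?_
  rw [div_mul_eq_mul_div, div_eq_one_iff_eq pi_ne_zero]
  linear_combination hrefl

theorem dF_dzeta_GFFT_general (d ζ : ℝ) (hd : d < 0) (hdn : ∀ m : ℕ, d ≠ -m)
    (hplus : ∀ m : ℕ, d / 2 + ζ ≠ -m) (hminus : ∀ m : ℕ, d / 2 - ζ ≠ -m) :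
    Summable (fun n : ℕ =>
      |sphereDegeneracy d n * (digamma ((n : ℝ) + d / 2 + ζ) + digamma ((n : ℝ) + d / 2 - ζ))|) ∧
    (1 / 2) * ∑' n : ℕ,
        sphereDegeneracy d n * (digamma ((n : ℝ) + d / 2 + ζ) + digamma ((n : ℝ) + d / 2 - ζ))
      = -ζ * (Real.sin (π * ζ) / Real.sin (π * d / 2)) *
          Real.Gamma (d / 2 - ζ) * Real.Gamma (d / 2 + ζ) / Real.Gamma (1 + d) := by
  have hadd : d / 2 + ζ + (d / 2 - ζ) = d := by ring
  have hsub : d / 2 + ζ - (d / 2 - ζ) = 2 * ζ := by ring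
  have hd_int (k : ℤ) : d ≠ k := by
    rintro rfl
    obtain ⟨m, hm⟩ := Int.eq_ofNat_of_zero_le (neg_nonneg.mpr (Int.cast_lt_zero.mp hd).le)
    exact hdn m (by rw [← Int.cast_natCast, ← hm, Int.cast_neg, neg_neg])
  have hsum := hasSum_sphereDegeneracy_mul_digamma (by rwa [hadd]) (by rwa [hadd]) hplus hminus
  rw [beta_sub_beta_one_sub_add hplus hminus, hadd, hsub] at hsum
  simp only [← add_assoc, ← add_sub_assoc] at hsum
  refine ⟨hsum.summable.abs, ?_⟩
  have hcos := Gamma_one_sub_mul_cos hd_int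
  rw [hsum.tsum_eq, add_comm 1 d, Gamma_add_one hd.ne, mul_div_cancel_left₀ ζ two_ne_zero]
  linear_combination
    (-2 * ζ * sin (π * ζ) * Gamma (d / 2 + ζ) * Gamma (d / 2 - ζ) / d) * hcos

theorem dF_dzeta_GFFT (d ζ : ℝ) (hζ0 : 0 < ζ) (hζ1 : ζ < 1)
    (hd1 : max (2 * ζ - 2) (-(2 * ζ)) < d) (hd2 : d < 0) :
    Summable (fun n : ℕ =>
      |sphereDegeneracy d n * (digamma ((n : ℝ) + d / 2 + ζ) + digamma ((n : ℝ) + d / 2 - ζ))|) ∧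
    (1 / 2) * ∑' n : ℕ,
        sphereDegeneracy d n * (digamma ((n : ℝ) + d / 2 + ζ) + digamma ((n : ℝ) + d / 2 - ζ))
      = -ζ * (Real.sin (π * ζ) / Real.sin (π * d / 2)) *
          Real.Gamma (d / 2 - ζ) * Real.Gamma (d / 2 + ζ) / Real.Gamma (1 + d) := by
  obtain ⟨hd_lower, hd_lower'⟩ := max_lt_iff.mp hd1
  exact dF_dzeta_GFFT_general d ζ hd2 (ne_neg_natCast (by linarith) hd2.ne)
    (ne_neg_natCast (by linarith) (by linarith)) (ne_neg_natCast (by linarith) (by linarith))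
end

section
/- The function x ↦ (π/24)·x·(1 − 4x²)·tan(πx) is Lebesgue integrable on (0,1) and ∫₀¹ (π/24)·x·(1 − 4x²)·tan(πx) dx = (ln 4)/16 − 3·ζ(3)/(16π²), where ζ(3) = ∑_{n≥1} 1/n³. (This integral of the derivative of the regularized sphere free energy between ζ = 0 and ζ = 1 reproduces the sphere free energy (1/16)(ln 4 − 3ζ(3)/π²) of a free conformal scalar on S³.) -/
open Real MeasureTheory

/-!
Multiply the finite identity
`sin θ = cos θ * ∑ k < N, (-1) ^ k * 2 sin (2 (k + 1) θ) + (-1) ^ N * sin ((2 N + 1) θ)`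
at `θ = π x` by `g x = x (1 - 4 x ^ 2) / cos (π x)`, which is bounded on `(0, 1)` because the
numerator vanishes at the zero `x = 1 / 2` of the cosine. By the Riemann–Lebesgue lemma the last
term integrates to `o(1)`, so `∫ g x sin (π x)` is an alternating series of sine coefficients of
`x (1 - 4 x ^ 2)`. Integration by parts evaluates these coefficients, and the series splits
into `∑ (-1) ^ k / (k + 1) = log 2` and `∑ (-1) ^ k / (k + 1) ^ 3 = 3 / 4 * ζ(3)`.
-/

open Filter Finset Set Topology Interval

section AlternatingSeries

lemma sum_range_two_mul_alternating_one_div_pow (p N : ℕ) :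
    ∑ k ∈ range (2 * N), (-1 : ℝ) ^ k * (1 / ((k : ℝ) + 1) ^ p) =
      ∑ k ∈ range (2 * N), 1 / ((k : ℝ) + 1) ^ p -
        2 / 2 ^ p * ∑ k ∈ range N, 1 / ((k : ℝ) + 1) ^ p := by
  induction N with
  | zero => simp
  | succ n ih =>
    have even_term : 1 / (2 * (n : ℝ) + 1 + 1) ^ p = 1 / 2 ^ p * (1 / ((n : ℝ) + 1) ^ p) := by
      rw [show 2 * (n : ℝ) + 1 + 1 = 2 * (n + 1) by ring, mul_pow, one_div_mul_one_div]
    rw [show 2 * (n + 1) = 2 * n + 1 + 1 by ring]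
    simp only [sum_range_succ, ih, pow_succ, pow_mul]
    push_cast
    rw [even_term]
    ring

lemma tendsto_two_mul_atTop : Tendsto (fun N : ℕ => 2 * N) atTop atTop :=
  tendsto_id.const_mul_atTop' two_pos

lemma tendsto_sum_alternating_one_div_pow {p : ℕ} (hp : p ≠ 0) {l : ℝ}
    (h : Tendsto (fun N : ℕ => ∑ k ∈ range (2 * N), 1 / ((k : ℝ) + 1) ^ p -
      2 / 2 ^ p * ∑ k ∈ range N, 1 / ((k : ℝ) + 1) ^ p) atTop (𝓝 l)) :
    Tendsto (fun N : ℕ => ∑ k ∈ range N, (-1 : ℝ) ^ k * (1 / ((k : ℝ) + 1) ^ p))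
      atTop (𝓝 l) := by
  have antitone_terms : Antitone fun k : ℕ => 1 / ((k : ℝ) + 1) ^ p := fun m n hmn => by
    dsimp only; gcongr
  have terms_tendsto_zero : Tendsto (fun k : ℕ => 1 / ((k : ℝ) + 1) ^ p) atTop (𝓝 0) := by
    simpa [hp] using (tendsto_one_div_add_atTop_nhds_zero_nat (𝕜 := ℝ)).pow p
  obtain ⟨l', hl'⟩ := antitone_terms.tendsto_alternating_series_of_tendsto_zero terms_tendsto_zero
  have even_sums_tendsto := hl'.comp tendsto_two_mul_atTop
  simp only [Function.comp_def, sum_range_two_mul_alternating_one_div_pow] at even_sums_tendsto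
  rwa [tendsto_nhds_unique h even_sums_tendsto]

lemma tendsto_sum_alternating_harmonic :
    Tendsto (fun N : ℕ => ∑ k ∈ range N, (-1 : ℝ) ^ k * (1 / ((k : ℝ) + 1)))
      atTop (𝓝 (log 2)) := by
  have harmonic_eq (N : ℕ) : (harmonic N : ℝ) = ∑ k ∈ range N, 1 / ((k : ℝ) + 1) := by
    simp [harmonic]
  have diff_tendsto := ((tendsto_harmonic_sub_log.comp tendsto_two_mul_atTop).sub
    tendsto_harmonic_sub_log).add_const (log 2)
  rw [sub_self, zero_add] at diff_tendsto
  suffices Tendsto (fun N : ℕ => (harmonic (2 * N) : ℝ) - harmonic N) atTop (𝓝 (log 2)) by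
    simpa [harmonic_eq] using tendsto_sum_alternating_one_div_pow one_ne_zero
      (by simpa [harmonic_eq] using this)
  refine diff_tendsto.congr' ?_
  filter_upwards [eventually_ne_atTop 0] with N hN
  simp only [Function.comp_apply, Nat.cast_mul, Nat.cast_ofNat]
  rw [log_mul two_ne_zero (Nat.cast_ne_zero.2 hN)]
  ring

lemma tendsto_sum_alternating_one_div_pow_of_one_lt {p : ℕ} (hp : 1 < p) :
    Tendsto (fun N : ℕ => ∑ k ∈ range N, (-1 : ℝ) ^ k * (1 / ((k : ℝ) + 1) ^ p))
      atTop (𝓝 ((1 - 2 / 2 ^ p) * ∑' n : ℕ, 1 / ((n : ℝ) + 1) ^ p)) := by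
  have summable : Summable fun n : ℕ => 1 / ((n : ℝ) + 1) ^ p := by
    simpa using (summable_nat_add_iff 1).2 (Real.summable_one_div_nat_pow.2 hp)
  have sums_tendsto := summable.hasSum.tendsto_sum_nat
  rw [sub_mul, one_mul]
  exact tendsto_sum_alternating_one_div_pow (by lia)
    ((sums_tendsto.comp tendsto_two_mul_atTop).sub (sums_tendsto.const_mul _))

end AlternatingSeries

section SineIntegrals

lemma cos_mul_sum_alternating_sin (θ : ℝ) (N : ℕ) :
    cos θ * ∑ k ∈ range N, (-1 : ℝ) ^ k * (2 * sin (2 * (k + 1) * θ)) =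
      sin θ - (-1) ^ N * sin ((2 * N + 1) * θ) := by
  induction N with
  | zero => simp
  | succ n ih =>
    have product_to_sum : cos θ * (2 * sin (2 * (n + 1) * θ)) =
        sin ((2 * (n + 1 : ℕ) + 1) * θ) + sin ((2 * n + 1) * θ) := by
      rw [show (2 * ((n + 1 : ℕ) : ℝ) + 1) * θ = 2 * (n + 1) * θ + θ by push_cast; ring,
        show (2 * (n : ℝ) + 1) * θ = 2 * (n + 1) * θ - θ by ring, sin_add, sin_sub]
      ring
    rw [sum_range_succ, mul_add, ih, mul_left_comm, product_to_sum]
    ring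

variable {g : ℝ → ℝ} {s : Set ℝ}

lemma integrableOn_mul_sin (hg : IntegrableOn g s) (a : ℝ) :
    IntegrableOn (fun x => g x * sin (a * x)) s :=
  Integrable.mul_bdd (c := 1) hg (by fun_prop) (.of_forall fun _ => abs_sin_le_one _)

lemma im_integral_exp_smul_indicator (hs : MeasurableSet s) (hg : IntegrableOn g s) (w : ℝ) :
    (∫ x, Real.fourierChar (-(x * w)) • s.indicator (fun x => (g x : ℂ)) x).im =
      -∫ x in s, g x * sin (2 * π * w * x) := by
  have indicator_integrable : Integrable (s.indicator fun x => (g x : ℂ)) :=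
    (integrable_indicator_iff hs).2 hg.ofReal
  have integrand_integrable : Integrable fun x =>
      Real.fourierChar (-(x * w)) • s.indicator (fun x => (g x : ℂ)) x := by
    simpa [mul_comm] using (Real.fourierIntegral_convergent_iff w).2 indicator_integrable
  rw [← integral_neg, ← integral_indicator hs]
  refine (Complex.imCLM.integral_comp_comm integrand_integrable).symm.trans ?_
  refine integral_congr_ae (.of_forall fun x => ?_)
  by_cases hx : x ∈ s
  · have angle : 2 * π * -(x * w) = -(2 * π * w * x) := by ring
    simp only [Complex.imCLM_apply, indicator_of_mem hx, Circle.smul_def, Real.fourierChar_apply,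
      smul_eq_mul, Complex.im_mul_ofReal, Complex.exp_ofReal_mul_I_im, angle, sin_neg]
    ring
  · simp [hx]

lemma tendsto_setIntegral_mul_sin_cocompact (hs : MeasurableSet s) (hg : IntegrableOn g s) :
    Tendsto (fun t => ∫ x in s, g x * sin (t * x)) (cocompact ℝ) (𝓝 0) := by
  have two_pi_inv_ne : (2 * π)⁻¹ ≠ 0 := by positivity
  have fourier_tendsto := (Real.tendsto_integral_exp_smul_cocompact
    (s.indicator fun x => (g x : ℂ))).comp
      (Homeomorph.mulLeft₀ _ two_pi_inv_ne).isClosedEmbedding.tendsto_cocompact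
  have im_tendsto := ((Complex.continuous_im.tendsto _).comp fourier_tendsto).neg
  rw [Complex.zero_im, neg_zero] at im_tendsto
  refine im_tendsto.congr fun t => ?_
  simp only [Function.comp_apply, Homeomorph.coe_mulLeft₀]
  rw [im_integral_exp_smul_indicator hs hg, neg_neg, mul_inv_cancel_left₀ (by positivity)]

lemma sum_alternating_setIntegral_mul_cos_mul_sin (hg : IntegrableOn g s) (c : ℝ) (N : ℕ) :
    ∑ k ∈ range N, (-1 : ℝ) ^ k * (2 * ∫ x in s, g x * cos (c * x) * sin (2 * (k + 1) * (c * x))) =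
      (∫ x in s, g x * sin (c * x)) - (-1) ^ N * ∫ x in s, g x * sin ((2 * N + 1) * c * x) := by
  have mul_cos_integrable : IntegrableOn (fun x => g x * cos (c * x)) s :=
    Integrable.mul_bdd (c := 1) hg (by fun_prop) (.of_forall fun _ => abs_cos_le_one _)
  have terms_integrable (k : ℕ) : IntegrableOn (fun x => (-1 : ℝ) ^ k *
      (2 * (g x * cos (c * x) * sin (2 * (k + 1) * (c * x))))) s := by
    simpa only [IntegrableOn, mul_assoc] using
      ((integrableOn_mul_sin mul_cos_integrable (2 * (k + 1) * c)).const_mul 2).const_mul ((-1) ^ k)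
  simp only [← integral_const_mul]
  rw [← integral_finsetSum _ fun k _ => terms_integrable k, ← integral_sub
    (integrableOn_mul_sin hg c) ((integrableOn_mul_sin hg _).const_mul _)]
  refine integral_congr_ae (.of_forall fun x => ?_)
  calc ∑ k ∈ range N, (-1 : ℝ) ^ k * (2 * (g x * cos (c * x) * sin (2 * (k + 1) * (c * x))))
      = g x * (cos (c * x) * ∑ k ∈ range N, (-1 : ℝ) ^ k * (2 * sin (2 * (k + 1) * (c * x)))) := by
        simp only [mul_sum]
        exact sum_congr rfl fun k _ => by ring
    _ = g x * sin (c * x) - (-1) ^ N * (g x * sin ((2 * N + 1) * c * x)) := by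
        rw [cos_mul_sum_alternating_sin, ← mul_assoc (2 * (N : ℝ) + 1)]
        ring

/-- With `f x = g x * cos (c * x)` the limit is `∫ x in s, f x * tan (c * x)`. -/
lemma tendsto_sum_alternating_setIntegral_mul_cos_mul_sin (hs : MeasurableSet s)
    (hg : IntegrableOn g s) {c : ℝ} (hc : c ≠ 0) :
    Tendsto (fun N : ℕ => ∑ k ∈ range N,
        (-1 : ℝ) ^ k * (2 * ∫ x in s, g x * cos (c * x) * sin (2 * (k + 1) * (c * x))))
      atTop (𝓝 (∫ x in s, g x * sin (c * x))) := by
  have frequency_atTop : Tendsto (fun N : ℕ => 2 * (N : ℝ) + 1) atTop atTop :=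
    tendsto_atTop_add_const_right _ _ (tendsto_natCast_atTop_atTop.const_mul_atTop two_pos)
  have frequency_cocompact : Tendsto (fun N : ℕ => (2 * (N : ℝ) + 1) * c) atTop (cocompact ℝ) :=
    (Homeomorph.mulRight₀ c hc).isClosedEmbedding.tendsto_cocompact.comp
      (frequency_atTop.mono_right atTop_le_cocompact)
  have remainder_tendsto : Tendsto (fun N : ℕ =>
      (-1) ^ N * ∫ x in s, g x * sin ((2 * N + 1) * c * x)) atTop (𝓝 0) :=
    bdd_le_mul_tendsto_zero' 1 (.of_forall fun N => by simp)
      ((tendsto_setIntegral_mul_sin_cocompact hs hg).comp frequency_cocompact)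
  simpa only [sum_alternating_setIntegral_mul_cos_mul_sin hg, sub_zero] using
    remainder_tendsto.const_sub (∫ x in s, g x * sin (c * x))

end SineIntegrals

section FourierCoefficients

variable {f f' f'' : ℝ → ℝ} {n : ℤ}

lemma integral_mul_cos_two_pi_int_mul (hf : ∀ x ∈ [[(0 : ℝ), 1]], HasDerivAt f (f' x) x)
    (hf' : IntervalIntegrable f' volume 0 1) (hn : n ≠ 0) :
    ∫ x in (0 : ℝ)..1, f x * cos (2 * π * n * x) =
      -(∫ x in (0 : ℝ)..1, f' x * sin (2 * π * n * x)) / (2 * π * n) := by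
  have sin_period : sin (2 * π * n) = 0 := by
    simpa [mul_comm, mul_left_comm] using sin_int_mul_pi (2 * n)
  have antideriv (x : ℝ) :
      HasDerivAt (fun x => sin (2 * π * n * x) / (2 * π * n)) (cos (2 * π * n * x)) x := by
    convert! (hasDerivAt_const_mul (x := x) (2 * π * (n : ℝ))).sin.div_const (2 * π * n) using 1
    field_simp
  rw [intervalIntegral.integral_mul_deriv_eq_deriv_mul hf (fun x _ => antideriv x) hf'
    (Continuous.intervalIntegrable (by fun_prop) _ _)]
  simp [sin_period, ← mul_div_assoc, intervalIntegral.integral_div, neg_div]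

lemma integral_mul_sin_two_pi_int_mul (hf : ∀ x ∈ [[(0 : ℝ), 1]], HasDerivAt f (f' x) x)
    (hf' : IntervalIntegrable f' volume 0 1) (hn : n ≠ 0) :
    ∫ x in (0 : ℝ)..1, f x * sin (2 * π * n * x) =
      (f 0 - f 1 + ∫ x in (0 : ℝ)..1, f' x * cos (2 * π * n * x)) / (2 * π * n) := by
  have cos_period : cos (2 * π * n) = 1 := by
    simpa [mul_comm] using cos_int_mul_two_pi n
  have antideriv (x : ℝ) :
      HasDerivAt (fun x => -cos (2 * π * n * x) / (2 * π * n)) (sin (2 * π * n * x)) x := by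
    convert! (hasDerivAt_const_mul (x := x) (2 * π * (n : ℝ))).cos.neg.div_const (2 * π * n) using 1
    field_simp
  rw [intervalIntegral.integral_mul_deriv_eq_deriv_mul hf (fun x _ => antideriv x) hf'
    (Continuous.intervalIntegrable (by fun_prop) _ _)]
  simp only [cos_period, mul_one, mul_zero, cos_zero, ← mul_div_assoc,
    intervalIntegral.integral_div, mul_neg, intervalIntegral.integral_neg]
  ring

lemma integral_mul_sin_two_pi_int_mul_eq_sub (hf : ∀ x ∈ [[(0 : ℝ), 1]], HasDerivAt f (f' x) x)
    (hf' : ∀ x ∈ [[(0 : ℝ), 1]], HasDerivAt f' (f'' x) x)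
    (hf'' : IntervalIntegrable f'' volume 0 1) (hn : n ≠ 0) :
    ∫ x in (0 : ℝ)..1, f x * sin (2 * π * n * x) = (f 0 - f 1) / (2 * π * n) -
      (∫ x in (0 : ℝ)..1, f'' x * sin (2 * π * n * x)) / (2 * π * n) ^ 2 := by
  have f'_integrable : IntervalIntegrable f' volume 0 1 :=
    ContinuousOn.intervalIntegrable fun x hx => (hf' x hx).continuousAt.continuousWithinAt
  rw [integral_mul_sin_two_pi_int_mul hf f'_integrable hn,
    integral_mul_cos_two_pi_int_mul hf' hf'' hn]
  ring

lemma integral_mul_one_sub_four_mul_sq_mul_sin (hn : n ≠ 0) :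
    ∫ x in (0 : ℝ)..1, x * (1 - 4 * x ^ 2) * sin (2 * π * n * x) =
      3 / (2 * π * n) - 24 / (2 * π * n) ^ 3 := by
  have cubic_deriv (x : ℝ) : HasDerivAt (fun x => x * (1 - 4 * x ^ 2)) (1 - 12 * x ^ 2) x := by
    convert! (hasDerivAt_id x).mul (((hasDerivAt_pow 2 x).const_mul 4).const_sub 1) using 1
    norm_num
    ring
  have quadratic_deriv (x : ℝ) : HasDerivAt (fun x => 1 - 12 * x ^ 2) (-24 * x) x := by
    convert! ((hasDerivAt_pow 2 x).const_mul 12).const_sub 1 using 1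
    norm_num
    ring
  have linear_deriv (x : ℝ) : HasDerivAt (fun x => -24 * x) (-24) x := hasDerivAt_const_mul _
  have const_deriv (x : ℝ) : HasDerivAt (fun _ => (-24 : ℝ)) 0 x := hasDerivAt_const x _
  have linear_integral : ∫ x in (0 : ℝ)..1, -24 * x * sin (2 * π * n * x) = 24 / (2 * π * n) := by
    rw [integral_mul_sin_two_pi_int_mul_eq_sub (fun x _ => linear_deriv x)
      (fun x _ => const_deriv x) intervalIntegrable_const hn]
    simp
  rw [integral_mul_sin_two_pi_int_mul_eq_sub (fun x _ => cubic_deriv x)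
    (fun x _ => quadratic_deriv x) (Continuous.intervalIntegrable (by fun_prop) _ _) hn,
    linear_integral]
  ring

end FourierCoefficients

section Secant

lemma abs_one_sub_two_mul_le_abs_cos_pi_mul {x : ℝ} (hx : x ∈ Icc (0 : ℝ) 1) :
    |1 - 2 * x| ≤ |cos (π * x)| := by
  have angle_le : |π / 2 - π * x| ≤ π / 2 := by
    rw [abs_le]
    constructor <;> nlinarith [pi_pos, hx.1, hx.2]
  calc |1 - 2 * x| = 2 / π * |π / 2 - π * x| := by
        rw [← abs_of_pos (show 0 < 2 / π by positivity), ← abs_mul]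
        congr 1
        field_simp
    _ ≤ |sin (π / 2 - π * x)| := mul_abs_le_abs_sin angle_le
    _ = |cos (π * x)| := by rw [sin_pi_div_two_sub]

lemma eq_one_half_of_cos_pi_mul_eq_zero {x : ℝ} (hx : x ∈ Icc (0 : ℝ) 1)
    (hcos : cos (π * x) = 0) : x = 1 / 2 := by
  have := abs_one_sub_two_mul_le_abs_cos_pi_mul hx
  rw [hcos, abs_zero, abs_nonpos_iff] at this
  linarith

lemma integrableOn_mul_one_sub_two_mul_div_cos {h : ℝ → ℝ} (hh : ContinuousOn h (Icc 0 1)) :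
    IntegrableOn (fun x => h x * ((1 - 2 * x) / cos (π * x))) (Icc 0 1) := by
  refine IntegrableOn.continuousOn_mul hh ?_ isCompact_Icc
  refine Measure.integrableOn_of_bounded (M := 1) measure_Icc_lt_top.ne
    (Measurable.aestronglyMeasurable (by fun_prop)) ?_
  refine ae_restrict_of_forall_mem measurableSet_Icc fun x hx => ?_
  rw [norm_eq_abs, abs_div]
  exact div_le_one_of_le₀ (abs_one_sub_two_mul_le_abs_cos_pi_mul hx) (abs_nonneg _)

end Secant

section FreeScalar

lemma integrableOn_mul_one_sub_four_mul_sq_div_cos :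
    IntegrableOn (fun x : ℝ => x * (1 - 4 * x ^ 2) / cos (π * x)) (Ioo 0 1) := by
  have factored := integrableOn_mul_one_sub_two_mul_div_cos
    (h := fun x => x * (1 + 2 * x)) (by fun_prop)
  refine (factored.congr_fun (fun x _ => ?_) measurableSet_Icc).mono_set Ioo_subset_Icc_self
  ring

lemma setIntegral_mul_one_sub_four_mul_sq_div_cos_mul_cos_mul_sin (k : ℕ) :
    ∫ x in Ioo (0 : ℝ) 1,
        x * (1 - 4 * x ^ 2) / cos (π * x) * cos (π * x) * sin (2 * (k + 1) * (π * x)) =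
      3 / (2 * π * (k + 1)) - 24 / (2 * π * (k + 1)) ^ 3 := by
  have coefficient := integral_mul_one_sub_four_mul_sq_mul_sin (n := k + 1) (by lia)
  push_cast at coefficient
  rw [← coefficient, intervalIntegral.integral_of_le zero_le_one, integral_Ioc_eq_integral_Ioo]
  refine setIntegral_congr_fun measurableSet_Ioo fun x hx => ?_
  have numerator_eq_zero (hcos : cos (π * x) = 0) : x * (1 - 4 * x ^ 2) = 0 := by
    rw [eq_one_half_of_cos_pi_mul_eq_zero (Ioo_subset_Icc_self hx) hcos]
    norm_num
  rw [div_mul_cancel_of_imp numerator_eq_zero]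
  ring_nf

lemma tendsto_sum_alternating_sine_coefficients :
    Tendsto (fun N : ℕ => ∑ k ∈ range N, (-1 : ℝ) ^ k *
        (2 * (3 / (2 * π * (k + 1)) - 24 / (2 * π * (k + 1)) ^ 3))) atTop
      (𝓝 (3 / π * log 2 - 9 / (2 * π ^ 3) * ∑' n : ℕ, 1 / ((n : ℝ) + 1) ^ 3)) := by
  have split := (tendsto_sum_alternating_harmonic.const_mul (3 / π)).sub
    ((tendsto_sum_alternating_one_div_pow_of_one_lt (p := 3) (by norm_num)).const_mul (6 / π ^ 3))
  convert! split using 2 with N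
  · rw [mul_sum, mul_sum, ← sum_sub_distrib]
    refine sum_congr rfl fun k _ => ?_
    field_simp
    ring
  · ring

end FreeScalar

theorem sphere_free_energy_free_scalar_d3 :
    MeasureTheory.IntegrableOn
      (fun x : ℝ => (π / 24) * x * (1 - 4 * x ^ 2) * Real.tan (π * x)) (Set.Ioo 0 1) ∧
    ∫ x in Set.Ioo (0 : ℝ) 1, (π / 24) * x * (1 - 4 * x ^ 2) * Real.tan (π * x)
      = Real.log 4 / 16 - 3 * (∑' n : ℕ, 1 / ((n : ℝ) + 1) ^ 3) / (16 * π ^ 2) := by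
  have quotient_integrable := integrableOn_mul_one_sub_four_mul_sq_div_cos
  have integrand_eq (x : ℝ) : (π / 24) * x * (1 - 4 * x ^ 2) * tan (π * x) =
      π / 24 * (x * (1 - 4 * x ^ 2) / cos (π * x) * sin (π * x)) := by
    rw [tan_eq_sin_div_cos]
    ring
  have series_tendsto := tendsto_sum_alternating_setIntegral_mul_cos_mul_sin measurableSet_Ioo
    quotient_integrable pi_ne_zero
  simp only [setIntegral_mul_one_sub_four_mul_sq_div_cos_mul_cos_mul_sin] at series_tendsto
  have log_four : log 4 = 2 * log 2 := by
    rw [show (4 : ℝ) = 2 ^ 2 by norm_num, log_pow, Nat.cast_ofNat]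
  simp only [integrand_eq]
  refine ⟨(integrableOn_mul_sin quotient_integrable π).const_mul _, ?_⟩
  rw [integral_const_mul,
    tendsto_nhds_unique series_tendsto tendsto_sum_alternating_sine_coefficients, log_four]
  field_simp
  ring
end

section
/- Let d be a real number with 0 < d < 2 and d ≠ 1. Then the series ∑_{n≥0} Γ(n + d − 1)·(2n + d − 1)/(Γ(n+1)·(n + d/2)·(n + d/2 − 1)) converges absolutely and its sum equals 0. (This expresses the vanishing, in dimensional regularization, of the coincident-point propagator C₁(x,x) of a conformally coupled free scalar on the d-sphere.) -/
/-!
For `d ∉ {2, 1, 0, -1, …}` the `n`-th term of the series is the difference `G (n + 1) - G n` of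
`G n = 2 n Γ(n + d - 1) / ((d - 2) Γ(n + 1) (n + d / 2 - 1))`. Since `G 0 = 0`, the partial sums
are the values of `G`. Euler's limit formula for `Γ` gives `Γ(n + d - 1) / Γ(n + 1) ~ n ^ (d - 2)`,
so when `re d < 2` the terms are asymptotic to `2 n ^ (d - 3)`, which is absolutely summable, and
`G n` is asymptotic to a multiple of `n ^ (d - 2)`, which tends to `0`.
-/

open Real

open Filter Topology Asymptotics

lemma isEquivalent_natCast_add {𝕜 : Type*} [NormedField 𝕜] [NormSMulClass ℤ 𝕜] (c : 𝕜) :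
    (fun n : ℕ => (n : 𝕜) + c) ~[atTop] fun n => (n : 𝕜) :=
  IsEquivalent.refl.add_const_of_norm_tendsto_atTop <|
    tendsto_norm_cobounded_atTop.comp tendsto_natCast_atTop_cobounded

lemma tendsto_natCast_cpow_zero {s : ℂ} (hs : s.re < 0) :
    Tendsto (fun n : ℕ => (n : ℂ) ^ s) atTop (𝓝 0) := by
  rw [tendsto_zero_iff_norm_tendsto_zero]
  refine ((tendsto_rpow_neg_atTop (neg_pos.mpr hs)).comp tendsto_natCast_atTop_atTop).congr' ?_
  filter_upwards [eventually_gt_atTop 0] with n hn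
  simp [Complex.norm_natCast_cpow_of_pos hn]

lemma ascPochhammer_eval_eq_prod_range {R : Type*} [CommSemiring R] (n : ℕ) (r : R) :
    (ascPochhammer R n).eval r = ∏ j ∈ Finset.range n, (r + j) := by
  induction n with
  | zero => simp
  | succ n ih => rw [ascPochhammer_succ_eval, ih, Finset.prod_range_succ]

lemma Gamma_add_nat_eq_mul_prod {s : ℂ} (hs : ∀ m : ℕ, s ≠ -m) (n : ℕ) :
    Complex.Gamma (s + n) = Complex.Gamma s * ∏ j ∈ Finset.range n, (s + j) := by
  rw [← ascPochhammer_eval_eq_prod_range, ← Complex.Gamma_add_nat_div_Gamma_eq s hs,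
    mul_div_cancel₀ _ (Complex.Gamma_ne_zero hs)]

lemma isEquivalent_Gamma_div_Gamma {s : ℂ} (hs : ∀ m : ℕ, s ≠ -m) :
    (fun n : ℕ => Complex.Gamma (n + 1 + s) / Complex.Gamma (n + 1)) ~[atTop]
      fun n => (n : ℂ) ^ s := by
  have hΓ : Complex.Gamma s ≠ 0 := Complex.Gamma_ne_zero hs
  have hlim : Tendsto (fun n => Complex.Gamma s / Complex.GammaSeq s n) atTop (𝓝 1) := by
    rw [← div_self hΓ]
    exact tendsto_const_nhds.div (Complex.GammaSeq_tendsto_Gamma s) hΓ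
  refine isEquivalent_of_tendsto_one (hlim.congr fun n => ?_)
  have hprod := Gamma_add_nat_eq_mul_prod hs (n + 1)
  rw [Pi.div_apply, Complex.GammaSeq, ← Complex.Gamma_nat_eq_factorial, add_comm _ s]
  push_cast at hprod
  rw [hprod]
  simp only [div_eq_mul_inv, mul_inv, inv_inv]
  ring

/-- The `n`-th term of the mode sum for the coincident-point propagator `C₁(x, x)` of a conformally
coupled free scalar on the `d`-sphere, without its prefactor and for complex `d`, as in dimensional
regularization. -/
noncomputable def tadpoleTerm (d : ℂ) (n : ℕ) : ℂ :=
  Complex.Gamma (n + d - 1) * (2 * n + d - 1) /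
    (Complex.Gamma (n + 1) * (n + d / 2) * (n + d / 2 - 1))

/-- The antidifference of `tadpoleTerm d` that vanishes at `0`, i.e. its sequence of partial
sums. -/
noncomputable def tadpoleAntidifference (d : ℂ) (n : ℕ) : ℂ :=
  (d / 2 - 1)⁻¹ * (n * Complex.Gamma (n + d - 1) / (Complex.Gamma (n + 1) * (n + d / 2 - 1)))

section

variable {d : ℂ}

lemma tadpoleAntidifference_succ_sub (hd : ∀ m : ℕ, d ≠ 2 - m) (n : ℕ) :
    tadpoleAntidifference d (n + 1) - tadpoleAntidifference d n = tadpoleTerm d n := by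
  obtain ⟨u, rfl⟩ : ∃ u, d = 2 * u := ⟨d / 2, by ring⟩
  have hu (k : ℕ) : (k : ℂ) + u - 1 ≠ 0 :=
    fun h => hd (2 * k) (by push_cast; linear_combination 2 * h)
  have hu₀ : u - 1 ≠ 0 := by simpa using hu 0
  have hun : (n : ℂ) + u - 1 ≠ 0 := hu n
  have hun_succ : (n : ℂ) + u ≠ 0 := by simpa [add_right_comm] using hu (n + 1)
  have hpole : (n : ℂ) + 2 * u - 1 ≠ 0 :=
    fun h => hd (n + 1) (by push_cast; linear_combination h)
  have hn : (n : ℂ) + 1 ≠ 0 := n.cast_add_one_ne_zero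
  have hΓ : Complex.Gamma ((n : ℂ) + 1) ≠ 0 := by
    rw [Complex.Gamma_nat_eq_factorial]
    exact_mod_cast n.factorial_ne_zero
  have hΓ_succ :
      Complex.Gamma (n + 1 + 2 * u - 1) = (n + 2 * u - 1) * Complex.Gamma (n + 2 * u - 1) := by
    rw [← Complex.Gamma_add_one _ hpole]
    ring_nf
  simp only [tadpoleAntidifference, tadpoleTerm, mul_div_cancel_left₀ u two_ne_zero]
  push_cast
  rw [hΓ_succ, Complex.Gamma_add_one _ hn, add_right_comm _ 1 u, add_sub_cancel_right]
  field_simp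
  ring

lemma sum_range_tadpoleTerm (hd : ∀ m : ℕ, d ≠ 2 - m) (N : ℕ) :
    ∑ n ∈ Finset.range N, tadpoleTerm d n = tadpoleAntidifference d N := by
  simp only [← tadpoleAntidifference_succ_sub hd, Finset.sum_range_sub]
  simp [tadpoleAntidifference]

lemma isEquivalent_Gamma_add_sub_one_div_Gamma (hd : ∀ m : ℕ, d ≠ 2 - m) :
    (fun n : ℕ => Complex.Gamma (n + d - 1) / Complex.Gamma (n + 1)) ~[atTop]
      fun n => (n : ℂ) ^ (d - 2) := by
  convert isEquivalent_Gamma_div_Gamma (s := d - 2) fun m h => hd m (by linear_combination h)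
    using 4
  ring

lemma isEquivalent_tadpoleTerm (hd : ∀ m : ℕ, d ≠ 2 - m) :
    tadpoleTerm d ~[atTop] fun n => 2 * (1 / (n : ℂ) ^ (3 - d)) := by
  have hrational := ((IsEquivalent.refl (u := fun _ : ℕ => (2 : ℂ))).mul
    (isEquivalent_natCast_add ((d - 1) / 2))).div
    ((isEquivalent_natCast_add (d / 2)).mul (isEquivalent_natCast_add (d / 2 - 1)))
  refine (((isEquivalent_Gamma_add_sub_one_div_Gamma hd).mul hrational).congr_left ?_).congr_right
    ?_
  · refine .of_forall fun n => ?_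
    simp only [Pi.mul_apply, Pi.div_apply, tadpoleTerm, div_mul_div_comm]
    ring_nf
  · filter_upwards [eventually_ne_atTop 0] with n hn
    have hn : (n : ℂ) ≠ 0 := Nat.cast_ne_zero.mpr hn
    have hpow : (n : ℂ) ^ (d - 2) = n / (n : ℂ) ^ (3 - d) := by
      rw [show d - 2 = 1 - (3 - d) by ring, Complex.cpow_sub _ _ hn, Complex.cpow_one]
    simp only [Pi.mul_apply, Pi.div_apply, hpow]
    field_simp

lemma summable_tadpoleTerm (hd : ∀ m : ℕ, d ≠ 2 - m) (hre : d.re < 2) :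
    Summable (tadpoleTerm d) := by
  refine (isEquivalent_tadpoleTerm hd).summable_iff_nat.mpr (Summable.mul_left 2 ?_)
  rw [Complex.summable_one_div_nat_cpow, Complex.sub_re, Complex.re_ofNat]
  linarith

lemma tendsto_tadpoleAntidifference (hd : ∀ m : ℕ, d ≠ 2 - m) (hre : d.re < 2) :
    Tendsto (tadpoleAntidifference d) atTop (𝓝 0) := by
  have hΓ : Tendsto (fun n : ℕ => Complex.Gamma (n + d - 1) / Complex.Gamma (n + 1))
      atTop (𝓝 0) :=
    (isEquivalent_Gamma_add_sub_one_div_Gamma hd).tendsto_nhds_iff.mpr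
      (tendsto_natCast_cpow_zero (by simpa using hre))
  have hratio : Tendsto (fun n : ℕ => (n : ℂ) / (n + (d / 2 - 1))) atTop (𝓝 1) :=
    tendsto_natCast_div_add_atTop _
  have hprod := (hratio.mul hΓ).const_mul (d / 2 - 1)⁻¹
  rw [mul_zero, mul_zero] at hprod
  refine hprod.congr fun n => ?_
  rw [tadpoleAntidifference, div_mul_div_comm, mul_comm (Complex.Gamma _), add_sub_assoc _ (d / 2)]

theorem tadpole_vanishes_short_range_general (hre : d.re < 2) (hd : ∀ m : ℕ, d ≠ 1 - m) :
    Summable (fun n => ‖tadpoleTerm d n‖) ∧ ∑' n, tadpoleTerm d n = 0 := by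
  have hd' : ∀ m : ℕ, d ≠ 2 - m
    | 0, h => by simp [h] at hre
    | m + 1, h => hd m (by rw [h]; push_cast; ring)
  have hsum := summable_tadpoleTerm hd' hre
  refine ⟨hsum.norm, (hsum.hasSum_iff_tendsto_nat.mpr ?_).tsum_eq⟩
  simpa only [sum_range_tadpoleTerm hd'] using tendsto_tadpoleAntidifference hd' hre

end

lemma tadpoleTerm_ofReal (d : ℝ) (n : ℕ) :
    tadpoleTerm d n = ((Gamma (n + d - 1) * (2 * n + d - 1) /
      (Gamma (n + 1) * (n + d / 2) * (n + d / 2 - 1)) : ℝ) : ℂ) := by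
  simp only [tadpoleTerm]
  push_cast [← Complex.Gamma_ofReal]
  rfl

theorem tadpole_vanishes_short_range (d : ℝ) (hd0 : 0 < d) (hd2 : d < 2) (hd1 : d ≠ 1) :
    Summable (fun n : ℕ =>
      |Real.Gamma ((n : ℝ) + d - 1) * (2 * (n : ℝ) + d - 1) /
        (Real.Gamma ((n : ℝ) + 1) * ((n : ℝ) + d / 2) * ((n : ℝ) + d / 2 - 1))|) ∧
    ∑' n : ℕ,
      Real.Gamma ((n : ℝ) + d - 1) * (2 * (n : ℝ) + d - 1) /
        (Real.Gamma ((n : ℝ) + 1) * ((n : ℝ) + d / 2) * ((n : ℝ) + d / 2 - 1)) = 0 := by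
  have hd : ∀ m : ℕ, d ≠ 1 - m
    | 0 => by simpa using hd1
    | m + 1 => by push_cast; linarith [m.cast_nonneg (α := ℝ)]
  have key := tadpole_vanishes_short_range_general (d := d) hd2 (by exact_mod_cast hd)
  simp only [tadpoleTerm_ofReal, Complex.norm_real, Real.norm_eq_abs] at key
  exact_mod_cast key
end

section
/- Let ζ and d be real numbers with 0 < ζ < 1, 2ζ − 2 < d < 0 and d ≠ −2ζ. Then the function u ↦ u^{d/2 − ζ − 1}·(1−u)^{2ζ−1}·((1−u)^{−d}(1+u) − 1) is Lebesgue integrable on (0,1) and Γ(d/2 − ζ)/Γ(d/2 + ζ) + (1/Γ(2ζ))·∫₀¹ u^{d/2 − ζ − 1}(1−u)^{2ζ−1}((1−u)^{−d}(1+u) − 1) du = 0. (This expresses the vanishing, in dimensional regularization, of the coincident-point propagator C(x,x) of the long-range generalized free field with exponent ζ on the d-sphere.) -/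
open Real MeasureTheory

/-!
Put `a = d / 2 - ζ`, which lies in `(-1, 0)`. The Beta integral
`∫₀¹ u ^ (a - 1) (1 - u) ^ (b - 1) du` diverges at `0`, but subtracting `u ^ (a - 1)` from its
integrand continues it analytically: integrating the derivative of `u ^ a ((1 - u) ^ b - 1)` gives
`∫₀¹ u ^ (a - 1) ((1 - u) ^ (b - 1) - 1) du = B(a, b) - 1 / a`.
Since `1 + u = (1 - u) + 2 u`, the tadpole integral is therefore
`(B(a, 1 - 2 a) - 1 / a) - (B(a, 2 ζ) - 1 / a) + 2 B(a + 1, -2 a)`. The poles `1 / a` cancel, and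
`B(a, 1 - 2 a) + 2 B(a + 1, -2 a) = 0` by the functional equation of `Γ`. What remains is
`-B(a, 2 ζ)`.
-/

section

open Set Filter Topology ProbabilityTheory

/-- The integrand `u ^ (a - 1) (1 - u) ^ (b - 1)` of the Beta integral `B(a, b)`. -/
noncomputable def betaIntegrand (a b u : ℝ) : ℝ :=
  u ^ (a - 1) * (1 - u) ^ (b - 1)

/-- The integrand of `B(a, b)` minus its leading term `u ^ (a - 1)` at `0`, which makes it
integrable on `(0, 1)` down to `a > -1`. -/
noncomputable def subtractedBetaIntegrand (a b u : ℝ) : ℝ :=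
  u ^ (a - 1) * ((1 - u) ^ (b - 1) - 1)

variable {a b u : ℝ}

lemma ofReal_betaIntegrand (hu : u ∈ Ioo 0 1) :
    (betaIntegrand a b u : ℂ) = (u : ℂ) ^ ((a : ℂ) - 1) * (1 - (u : ℂ)) ^ ((b : ℂ) - 1) := by
  rw [betaIntegrand, Complex.ofReal_mul, Complex.ofReal_cpow hu.1.le,
    Complex.ofReal_cpow (sub_nonneg.2 hu.2.le)]
  push_cast
  rfl

lemma integrableOn_betaIntegrand (ha : 0 < a) (hb : 0 < b) :
    IntegrableOn (betaIntegrand a b) (Ioo 0 1) := by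
  have hconv := Complex.betaIntegral_convergent (u := a) (v := b) (by simpa) (by simpa)
  rw [intervalIntegrable_iff_integrableOn_Ioo_of_le zero_le_one] at hconv
  simpa [IntegrableOn] using
    (hconv.congr_fun (fun _ hu ↦ (ofReal_betaIntegrand hu).symm) measurableSet_Ioo).re

lemma integral_betaIntegrand (ha : 0 < a) (hb : 0 < b) :
    ∫ u in Ioo 0 1, betaIntegrand a b u = beta a b := by
  rw [beta_eq_betaIntegralReal a b ha hb, Complex.betaIntegral,
    intervalIntegral.integral_of_le zero_le_one, integral_Ioc_eq_integral_Ioo,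
    ← setIntegral_congr_fun measurableSet_Ioo fun _ hu ↦ ofReal_betaIntegrand hu,
    integral_complex_ofReal, Complex.ofReal_re]

lemma add_mul_beta_add_one_left (ha : a ≠ 0) (hab : a + b ≠ 0) :
    (a + b) * beta (a + 1) b = a * beta a b := by
  rw [beta, beta, add_right_comm, Gamma_add_one ha, Gamma_add_one hab]
  field_simp

lemma beta_one_sub_two_mul_add_two_mul_beta (ha : a ≠ 0) :
    beta a (1 - 2 * a) + 2 * beta (a + 1) (-2 * a) = 0 := by
  have h_right : Gamma (1 - 2 * a) = -2 * a * Gamma (-2 * a) := by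
    rw [← Gamma_add_one (by simpa using ha)]
    ring_nf
  have h_sum : a + 1 + -2 * a = a + (1 - 2 * a) := by ring
  rw [beta, beta, Gamma_add_one ha, h_right, h_sum]
  ring

lemma abs_one_sub_rpow_sub_one_le (hb : 0 ≤ b) (hu₀ : 0 ≤ u) (hu₁ : u ≤ 1) :
    |(1 - u) ^ b - 1| ≤ max 1 b * u := by
  have h_base : 0 ≤ 1 - u := sub_nonneg.2 hu₁
  have h_upper : (1 - u) ^ b ≤ 1 := rpow_le_one h_base (by linarith) hb
  have h_lower : 1 - max 1 b * u ≤ (1 - u) ^ b := calc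
    1 - max 1 b * u = 1 + max 1 b * -u := by ring
    _ ≤ (1 + -u) ^ max 1 b :=
      one_add_mul_self_le_rpow_one_add (neg_le_neg hu₁) (le_max_left 1 b)
    _ = (1 - u) ^ max 1 b := by rw [← sub_eq_add_neg]
    _ ≤ (1 - u) ^ b :=
      rpow_le_rpow_of_exponent_ge' h_base (by linarith) hb (le_max_right 1 b)
  rw [abs_of_nonpos (by linarith)]
  linarith

lemma norm_rpow_mul_one_sub_rpow_sub_one_le (hb : 0 ≤ b) (hu : u ∈ Ioo 0 1) :
    ‖u ^ a * ((1 - u) ^ b - 1)‖ ≤ max 1 b * u ^ (a + 1) := by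
  rw [norm_mul, norm_of_nonneg (rpow_nonneg hu.1.le a), norm_eq_abs, rpow_add_one hu.1.ne',
    mul_left_comm]
  exact mul_le_mul_of_nonneg_left (abs_one_sub_rpow_sub_one_le hb hu.1.le hu.2.le)
    (rpow_nonneg hu.1.le a)

lemma integrableOn_rpow_mul_one_sub_rpow_sub_one (ha : -1 < a) (hb : 0 ≤ b) :
    IntegrableOn (fun u : ℝ ↦ u ^ (a - 1) * ((1 - u) ^ b - 1)) (Ioo 0 1) := by
  have h_dom : IntegrableOn (fun u : ℝ ↦ max 1 b * u ^ a) (Ioo 0 1) :=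
    ((intervalIntegral.integrableOn_Ioo_rpow_iff zero_lt_one).2 ha).const_mul _
  refine h_dom.mono' (by fun_prop) (ae_restrict_of_forall_mem measurableSet_Ioo fun u hu ↦ ?_)
  simpa using norm_rpow_mul_one_sub_rpow_sub_one_le (a := a - 1) hb hu

lemma subtractedBetaIntegrand_eq_add_betaIntegrand (hu : u ∈ Ioo 0 1) :
    subtractedBetaIntegrand a b u =
      u ^ (a - 1) * ((1 - u) ^ b - 1) + betaIntegrand (a + 1) b u := by
  have h_left : u ^ a = u ^ (a - 1) * u := by
    rw [← rpow_add_one hu.1.ne', sub_add_cancel]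
  have h_right : (1 - u) ^ b = (1 - u) ^ (b - 1) * (1 - u) := by
    rw [← rpow_add_one (sub_pos.2 hu.2).ne', sub_add_cancel]
  rw [subtractedBetaIntegrand, betaIntegrand, add_sub_cancel_right, h_left, h_right]
  ring

lemma integrableOn_subtractedBetaIntegrand (ha : -1 < a) (hb : 0 < b) :
    IntegrableOn (subtractedBetaIntegrand a b) (Ioo 0 1) :=
  ((integrableOn_rpow_mul_one_sub_rpow_sub_one ha hb.le).add
    (integrableOn_betaIntegrand (neg_lt_iff_pos_add.1 ha) hb)).congr_fun
      (fun _ hu ↦ (subtractedBetaIntegrand_eq_add_betaIntegrand hu).symm) measurableSet_Ioo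

lemma hasDerivAt_rpow_mul_one_sub_rpow_sub_one (hu : u ∈ Ioo 0 1) :
    HasDerivAt (fun u : ℝ ↦ u ^ a * ((1 - u) ^ b - 1))
      (a * subtractedBetaIntegrand a b u - (a + b) * betaIntegrand (a + 1) b u) u := by
  have h_left := hasDerivAt_rpow_const (p := a) (Or.inl hu.1.ne')
  have h_right := (((hasDerivAt_id u).const_sub 1).rpow_const (p := b)
    (Or.inl (sub_pos.2 hu.2).ne')).sub_const 1
  refine (h_left.mul h_right).congr_deriv ?_
  rw [subtractedBetaIntegrand_eq_add_betaIntegrand hu, betaIntegrand, add_sub_cancel_right]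
  simp only [id]
  ring

lemma tendsto_rpow_mul_one_sub_rpow_sub_one_nhdsGT_zero (ha : -1 < a) (hb : 0 ≤ b) :
    Tendsto (fun u : ℝ ↦ u ^ a * ((1 - u) ^ b - 1)) (𝓝[>] 0) (𝓝 0) := by
  have ha' : 0 < a + 1 := neg_lt_iff_pos_add.1 ha
  have h_bound : Tendsto (fun u : ℝ ↦ max 1 b * u ^ (a + 1)) (𝓝[>] 0) (𝓝 0) := by
    have h := (continuous_const.mul (continuous_rpow_const ha'.le)).tendsto' (0 : ℝ) 0
      (show max 1 b * (0 : ℝ) ^ (a + 1) = 0 by rw [zero_rpow ha'.ne', mul_zero])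
    exact h.mono_left nhdsWithin_le_nhds
  refine squeeze_zero_norm' ?_ h_bound
  filter_upwards [Ioo_mem_nhdsGT zero_lt_one] with u hu
  exact norm_rpow_mul_one_sub_rpow_sub_one_le hb hu

lemma tendsto_rpow_mul_one_sub_rpow_sub_one_nhdsLT_one (hb : 0 < b) :
    Tendsto (fun u : ℝ ↦ u ^ a * ((1 - u) ^ b - 1)) (𝓝[<] 1) (𝓝 (-1)) := by
  have h_cont : ContinuousAt (fun u : ℝ ↦ u ^ a * ((1 - u) ^ b - 1)) 1 :=
    (continuousAt_id.rpow_const (Or.inl one_ne_zero)).mul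
      (((continuousAt_const.sub continuousAt_id).rpow_const (Or.inr hb.le)).sub continuousAt_const)
  simpa [zero_rpow hb.ne'] using h_cont.tendsto.mono_left nhdsWithin_le_nhds

lemma integral_subtractedBetaIntegrand (ha : -1 < a) (ha₀ : a ≠ 0) (hb : 0 < b)
    (hab : a + b ≠ 0) :
    ∫ u in Ioo 0 1, subtractedBetaIntegrand a b u = beta a b - 1 / a := by
  have ha' : 0 < a + 1 := neg_lt_iff_pos_add.1 ha
  have h_sub := (integrableOn_subtractedBetaIntegrand ha hb).const_mul a
  have h_beta := (integrableOn_betaIntegrand ha' hb).const_mul (a + b)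
  have h_ftc := intervalIntegral.integral_eq_sub_of_hasDerivAt_of_tendsto zero_lt_one
    (fun _ hu ↦ hasDerivAt_rpow_mul_one_sub_rpow_sub_one hu)
    ((intervalIntegrable_iff_integrableOn_Ioo_of_le zero_le_one).2 (h_sub.sub h_beta))
    (tendsto_rpow_mul_one_sub_rpow_sub_one_nhdsGT_zero ha hb.le)
    (tendsto_rpow_mul_one_sub_rpow_sub_one_nhdsLT_one hb)
  rw [intervalIntegral.integral_of_le zero_le_one, integral_Ioc_eq_integral_Ioo,
    integral_sub h_sub h_beta, integral_const_mul, integral_const_mul,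
    integral_betaIntegrand ha' hb, add_mul_beta_add_one_left ha₀ hab] at h_ftc
  field_simp
  linarith

/-- The integrand in the integral representation of the tadpole, the coincident-point propagator
`C(x, x)` of the long-range generalized free field with exponent `ζ` on the `d`-sphere. -/
noncomputable def tadpoleIntegrand (ζ d u : ℝ) : ℝ :=
  u ^ (d / 2 - ζ - 1) * (1 - u) ^ (2 * ζ - 1) * ((1 - u) ^ (-d) * (1 + u) - 1)

variable {ζ d : ℝ}

lemma tadpoleIntegrand_eq_betaIntegrand (hu : u ∈ Ioo 0 1) :
    tadpoleIntegrand ζ d u =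
      subtractedBetaIntegrand (d / 2 - ζ) (1 - 2 * (d / 2 - ζ)) u -
        subtractedBetaIntegrand (d / 2 - ζ) (2 * ζ) u +
        2 * betaIntegrand (d / 2 - ζ + 1) (-2 * (d / 2 - ζ)) u := by
  have hu' : 0 < 1 - u := sub_pos.2 hu.2
  have h_left : u ^ (d / 2 - ζ) = u ^ (d / 2 - ζ - 1) * u := by
    rw [← rpow_add_one hu.1.ne', sub_add_cancel]
  have h_exp : (1 - u) ^ (-2 * (d / 2 - ζ) - 1) = (1 - u) ^ (2 * ζ - 1) * (1 - u) ^ (-d) := by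
    rw [← rpow_add hu']
    ring_nf
  have h_right : (1 - u) ^ (1 - 2 * (d / 2 - ζ) - 1) =
      (1 - u) ^ (2 * ζ - 1) * (1 - u) ^ (-d) * (1 - u) := by
    rw [← h_exp, ← rpow_add_one hu'.ne']
    ring_nf
  rw [tadpoleIntegrand, subtractedBetaIntegrand, subtractedBetaIntegrand, betaIntegrand,
    add_sub_cancel_right, h_left, h_exp, h_right]
  ring

lemma integrableOn_tadpoleIntegrand (hζ : 0 < ζ) (hd_lower : 2 * ζ - 2 < d)
    (hd_upper : d < 2 * ζ) : IntegrableOn (tadpoleIntegrand ζ d) (Ioo 0 1) := by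
  have h_first := integrableOn_subtractedBetaIntegrand (a := d / 2 - ζ)
    (b := 1 - 2 * (d / 2 - ζ)) (by linarith) (by linarith)
  have h_second := integrableOn_subtractedBetaIntegrand (a := d / 2 - ζ) (b := 2 * ζ)
    (by linarith) (by linarith)
  have h_third := integrableOn_betaIntegrand (a := d / 2 - ζ + 1) (b := -2 * (d / 2 - ζ))
    (by linarith) (by linarith)
  exact ((h_first.sub h_second).add (h_third.const_mul 2)).congr_fun
    (fun _ hu ↦ (tadpoleIntegrand_eq_betaIntegrand hu).symm) measurableSet_Ioo

lemma integral_tadpoleIntegrand (hζ : 0 < ζ) (hd_lower : 2 * ζ - 2 < d) (hd_upper : d < 2 * ζ)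
    (hd_pole : d ≠ -(2 * ζ)) :
    ∫ u in Ioo 0 1, tadpoleIntegrand ζ d u = -beta (d / 2 - ζ) (2 * ζ) := by
  rw [setIntegral_congr_fun measurableSet_Ioo fun _ hu ↦ tadpoleIntegrand_eq_betaIntegrand hu]
  obtain ⟨a, ha_eq⟩ : ∃ a, d / 2 - ζ = a := ⟨_, rfl⟩
  rw [ha_eq]
  have ha : -1 < a := by linarith
  have ha₀ : a < 0 := by linarith
  have hb : 0 < 2 * ζ := by linarith
  have hb' : 0 < 1 - 2 * a := by linarith
  have hab : a + 2 * ζ ≠ 0 := fun h ↦ hd_pole (by linarith)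
  have h_first := integrableOn_subtractedBetaIntegrand ha hb'
  have h_second := integrableOn_subtractedBetaIntegrand ha hb
  have h_third := integrableOn_betaIntegrand (a := a + 1) (b := -2 * a)
    (by linarith) (by linarith)
  calc ∫ u in Ioo 0 1, (subtractedBetaIntegrand a (1 - 2 * a) u -
          subtractedBetaIntegrand a (2 * ζ) u + 2 * betaIntegrand (a + 1) (-2 * a) u)
    _ = (∫ u in Ioo 0 1, subtractedBetaIntegrand a (1 - 2 * a) u) -
          (∫ u in Ioo 0 1, subtractedBetaIntegrand a (2 * ζ) u) +
          2 * ∫ u in Ioo 0 1, betaIntegrand (a + 1) (-2 * a) u := by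
      rw [← integral_sub h_first h_second, ← integral_const_mul]
      exact integral_add (h_first.sub h_second) (h_third.const_mul 2)
    _ = (beta a (1 - 2 * a) - 1 / a) - (beta a (2 * ζ) - 1 / a) + 2 * beta (a + 1) (-2 * a) := by
      rw [integral_subtractedBetaIntegrand ha ha₀.ne hb' (by linarith),
        integral_subtractedBetaIntegrand ha ha₀.ne hb hab,
        integral_betaIntegrand (by linarith) (by linarith)]
    _ = -beta a (2 * ζ) := by linarith [beta_one_sub_two_mul_add_two_mul_beta ha₀.ne]

theorem tadpole_vanishes_long_range_general (hζ : 0 < ζ) (hd_lower : 2 * ζ - 2 < d)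
    (hd_upper : d < 2 * ζ) (hd_pole : d ≠ -(2 * ζ)) :
    IntegrableOn (tadpoleIntegrand ζ d) (Ioo 0 1) ∧
    Gamma (d / 2 - ζ) / Gamma (d / 2 + ζ) +
      (1 / Gamma (2 * ζ)) * ∫ u in Ioo 0 1, tadpoleIntegrand ζ d u = 0 := by
  refine ⟨integrableOn_tadpoleIntegrand hζ hd_lower hd_upper, ?_⟩
  have hΓ : Gamma (2 * ζ) ≠ 0 := (Gamma_pos_of_pos (by linarith)).ne'
  have h_sum : d / 2 - ζ + 2 * ζ = d / 2 + ζ := by ring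
  rw [integral_tadpoleIntegrand hζ hd_lower hd_upper hd_pole, beta, h_sum]
  field_simp
  ring

end

theorem tadpole_vanishes_long_range (ζ d : ℝ) (hζ0 : 0 < ζ) (hζ1 : ζ < 1)
    (hd1 : 2 * ζ - 2 < d) (hd2 : d < 0) (hd3 : d ≠ -(2 * ζ)) :
    MeasureTheory.IntegrableOn
      (fun u : ℝ => u ^ (d / 2 - ζ - 1) * (1 - u) ^ (2 * ζ - 1) *
        ((1 - u) ^ (-d) * (1 + u) - 1)) (Set.Ioo 0 1) ∧
    Real.Gamma (d / 2 - ζ) / Real.Gamma (d / 2 + ζ) +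
      (1 / Real.Gamma (2 * ζ)) * ∫ u in Set.Ioo (0 : ℝ) 1,
        u ^ (d / 2 - ζ - 1) * (1 - u) ^ (2 * ζ - 1) * ((1 - u) ^ (-d) * (1 + u) - 1)
      = 0 :=
  tadpole_vanishes_long_range_general hζ0 hd1 (by linarith) hd3
end

section
/- The series ∑_{n≥0} A_n·(27/256)ⁿ converges and its sum equals 4/3. (At the critical coupling of the melonic Schwinger–Dyson equation, the wave-function resummation factor takes the value 𝒵 = 4/3.) -/
/-!
The generating series `F` of the Fuss–Catalan numbers of order `d + 1` satisfies
`F (X * (1 - X) ^ d) = 1 / (1 - X)`: after multiplication by `1 - X`, the coefficient of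
`X ^ (m + 1)` is an `(m + 1)`-st finite difference of a polynomial of degree `m`. As
`X * (1 - X) ^ d` is invertible under composition, `F = 1 + X * F ^ (d + 1)`.

The coefficients of `F` are nonnegative, so at `z ≥ 0` each partial sum is bounded by any
nonnegative solution of `s = 1 + z * s ^ (d + 1)`. Hence the series converges, and its sum is the
smallest such solution. For `z = t * (1 - t) ^ d` with `0 ≤ t ≤ 1 / (d + 1)` this is `1 / (1 - t)`,
by Bernoulli's inequality; the critical value `27 / 256` is the endpoint `d = 3`, `t = 1 / 4`.
-/

/-- The Fuss–Catalan numbers of order 4. -/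
noncomputable def fussCatalan4 (n : ℕ) : ℝ :=
  (1 / (4 * (n : ℝ) + 1)) * (Nat.choose (4 * n + 1) n : ℝ)

open Finset PowerSeries

section PowerSeriesAlgebra

variable {R : Type*} [CommRing R]

lemma coeff_one_sub_X_pow (k j : ℕ) :
    coeff j ((1 - X : R⟦X⟧) ^ k) = (-1) ^ j * (k.choose j : R) := by
  have eq_rescale : (1 - X : R⟦X⟧) ^ k = rescale (-1) (binomialSeries R (k : ℤ)) := by
    rw [binomialSeries_nat, map_pow, map_add, map_one, rescale_neg_one_X, sub_eq_add_neg]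
  rw [eq_rescale, coeff_rescale, binomialSeries_coeff, Ring.choose_natCast, zsmul_eq_mul, mul_one,
    Int.cast_natCast]

lemma coeff_mul_subst_eq_sum_range {a : R⟦X⟧} (ha : X ∣ a) (f g : R⟦X⟧) (m : ℕ) :
    coeff m (g * f.subst a) = ∑ n ∈ range (m + 1), coeff n f * coeff m (g * a ^ n) := by
  have coeff_subst_eq : ∀ j ≤ m,
      coeff j (f.subst a) = ∑ n ∈ range (m + 1), coeff n f * coeff j (a ^ n) := by
    intro j hj
    rw [coeff_subst' (.of_constantCoeff_zero' (X_dvd_iff.mp ha))]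
    refine finsum_eq_sum_of_support_subset _ fun n hn => ?_
    by_contra hmn
    simp only [coe_range, Set.mem_Iio, not_lt] at hmn
    exact hn (by simp [X_pow_dvd_iff.mp (pow_dvd_pow_of_dvd ha n) j (by omega)])
  simp only [coeff_mul, mul_sum]
  rw [sum_comm]
  refine sum_congr rfl fun q hq => ?_
  have hq₂ : q.2 ≤ m := by rw [HasAntidiagonal.mem_antidiagonal] at hq; omega
  rw [coeff_subst_eq q.2 hq₂, mul_sum]
  exact sum_congr rfl fun n _ => mul_left_comm _ _ _

lemma subst_injective_of_isUnit_coeff_one {a : R⟦X⟧} (ha₀ : constantCoeff a = 0)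
    (ha₁ : IsUnit (coeff 1 a)) : Function.Injective (subst a : R⟦X⟧ → R⟦X⟧) := by
  have ha : HasSubst a := .of_constantCoeff_zero' ha₀
  let b := a.substInvOfIsUnit ha₁
  have hb : HasSubst b := .substInvOfIsUnit a ha₁
  have left_inverse : Function.LeftInverse (subst b : R⟦X⟧ → R⟦X⟧) (subst a) := fun f => by
    rw [subst_comp_subst_apply ha hb, subst_substInvOfIsUnit_right a ha₀ ha₁, X_subst]
  exact left_inverse.injective

end PowerSeriesAlgebra

section FussCatalan

/-- The Fuss–Catalan numbers of order `p`, which count the `p`-ary trees with `n` internal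
nodes; they are taken in `ℝ` so that the division is exact. -/
noncomputable def fussCatalan (p n : ℕ) : ℝ :=
  ((p * n + 1).choose n : ℝ) / (p * n + 1)

/-- The ordinary generating series of the Fuss–Catalan numbers of order `p`. -/
noncomputable def fussCatalanSeries (p : ℕ) : ℝ⟦X⟧ :=
  PowerSeries.mk (fussCatalan p)

lemma fussCatalan_nonneg (p n : ℕ) : 0 ≤ fussCatalan p n := by
  unfold fussCatalan
  positivity

lemma fussCatalan_four (n : ℕ) : fussCatalan 4 n = fussCatalan4 n := by
  simp only [fussCatalan, fussCatalan4, Nat.cast_ofNat]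
  ring

lemma alternating_sum_choose_mul_choose_mul (p : ℕ) {m n : ℕ} (hmn : m < n) :
    ∑ k ∈ range (n + 1), (-1 : ℤ) ^ (n - k) * n.choose k * (p * k).choose m = 0 := by
  let P : Polynomial ℤ := (descPochhammer ℤ m).comp (Polynomial.C (p : ℤ) * Polynomial.X)
  have eval_P (k : ℕ) : P.eval (k : ℤ) = m.factorial * (p * k).choose m := by
    rw [Polynomial.eval_comp, Polynomial.eval_C_mul, Polynomial.eval_X, ← Nat.cast_mul,
      descPochhammer_eval_eq_descFactorial, Nat.descFactorial_eq_factorial_mul_choose, Nat.cast_mul]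
  have natDegree_P : P.natDegree < n := by
    refine lt_of_le_of_lt ?_ hmn
    calc P.natDegree ≤ _ := Polynomial.natDegree_comp_le
      _ ≤ m * 1 := by
        gcongr
        · exact (descPochhammer_natDegree ℤ m).le
        · exact (Polynomial.natDegree_C_mul_le _ _).trans Polynomial.natDegree_X_le
      _ = m := mul_one m
  have iterated_diff := congrFun (Polynomial.fwdDiff_iter_eq_zero_of_degree_lt natDegree_P) 0
  simp only [fwdDiff_iter_eq_sum_shift, zero_add, nsmul_eq_mul, mul_one, eval_P, smul_eq_mul,
    Pi.zero_apply] at iterated_diff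
  refine mul_left_cancel₀ (Nat.cast_ne_zero.mpr m.factorial_ne_zero : (m.factorial : ℤ) ≠ 0) ?_
  rw [mul_zero, mul_sum, ← iterated_diff]
  exact sum_congr rfl fun k _ => mul_left_comm _ _ _

lemma fussCatalan_mul_choose (d : ℕ) {m n : ℕ} (hn : n ≤ m + 1) :
    fussCatalan (d + 1) n * ((d * n + 1).choose (m + 1 - n) : ℝ) =
      ((m + 1).choose n : ℝ) * (((d + 1) * n).choose m : ℝ) / (m + 1) := by
  have absorb : (((d + 1) * n + 1 : ℕ) : ℝ) * ((d + 1) * n).choose m =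
      ((d + 1) * n + 1).choose (m + 1) * (m + 1 : ℕ) :=
    mod_cast Nat.add_one_mul_choose_eq ((d + 1) * n) m
  have trinomial : (((d + 1) * n + 1).choose (m + 1) : ℝ) * (m + 1).choose n =
      ((d + 1) * n + 1).choose n * (d * n + 1).choose (m + 1 - n) := by
    have := Nat.choose_mul (n := (d + 1) * n + 1) hn
    rw [show (d + 1) * n + 1 - n = d * n + 1 by rw [add_one_mul]; omega] at this
    exact_mod_cast this
  push_cast at absorb
  rw [fussCatalan, Nat.cast_add_one, div_mul_eq_mul_div,
    div_eq_div_iff (by positivity) (by positivity)]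
  linear_combination (-(m + 1 : ℝ)) * trinomial - ((m + 1).choose n : ℝ) * absorb

lemma alternating_sum_fussCatalan_mul_choose (d m : ℕ) :
    ∑ n ∈ range (m + 2),
      fussCatalan (d + 1) n * ((-1) ^ (m + 1 - n) * ((d * n + 1).choose (m + 1 - n) : ℝ)) = 0 := by
  have diff_eq_zero : ∑ n ∈ range (m + 2),
      (-1 : ℝ) ^ (m + 1 - n) * (m + 1).choose n * ((d + 1) * n).choose m = 0 :=
    mod_cast alternating_sum_choose_mul_choose_mul (d + 1) m.lt_succ_self
  rw [← zero_div ((m : ℝ) + 1), ← diff_eq_zero, sum_div]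
  refine sum_congr rfl fun n hn => ?_
  rw [mul_left_comm, fussCatalan_mul_choose d (mem_range_succ_iff.mp hn)]
  ring

lemma one_sub_X_mul_fussCatalanSeries_subst (d : ℕ) :
    (1 - X) * (fussCatalanSeries (d + 1)).subst (X * (1 - X) ^ d : ℝ⟦X⟧) = 1 := by
  ext m
  have coeff_term : ∀ n ∈ range (m + 1),
      coeff n (fussCatalanSeries (d + 1)) * coeff m ((1 - X) * (X * (1 - X) ^ d : ℝ⟦X⟧) ^ n) =
        fussCatalan (d + 1) n * ((-1) ^ (m - n) * ((d * n + 1).choose (m - n) : ℝ)) := by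
    intro n hn
    have regroup : (1 - X) * (X * (1 - X) ^ d : ℝ⟦X⟧) ^ n = X ^ n * (1 - X) ^ (d * n + 1) := by
      rw [mul_pow, pow_succ, pow_mul]
      ring
    rw [fussCatalanSeries, coeff_mk, regroup, coeff_X_pow_mul', if_pos (mem_range_succ_iff.mp hn),
      coeff_one_sub_X_pow]
  rw [coeff_mul_subst_eq_sum_range (dvd_mul_right X _), sum_congr rfl coeff_term]
  cases m with
  | zero => simp [fussCatalan]
  | succ m => rw [alternating_sum_fussCatalan_mul_choose, coeff_one, if_neg m.succ_ne_zero]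

theorem fussCatalanSeries_eq_one_add (d : ℕ) :
    fussCatalanSeries (d + 1) = 1 + X * fussCatalanSeries (d + 1) ^ (d + 1) := by
  set F := fussCatalanSeries (d + 1)
  let φ : ℝ⟦X⟧ := X * (1 - X) ^ d
  have φ_zero : constantCoeff φ = 0 := by simp [φ]
  have φ_one : coeff 1 φ = 1 := by simp [φ, coeff_succ_X_mul 0]
  have hφ : HasSubst φ := .of_constantCoeff_zero' φ_zero
  have inverse : (1 - X) * F.subst φ = 1 := one_sub_X_mul_fussCatalanSeries_subst d
  refine subst_injective_of_isUnit_coeff_one φ_zero (φ_one ▸ isUnit_one) ?_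
  calc (F.subst φ : ℝ⟦X⟧) = 1 + X * F.subst φ := by linear_combination inverse
    _ = 1 + X * ((1 - X) * F.subst φ) ^ d * F.subst φ := by rw [inverse, one_pow, mul_one]
    _ = 1 + φ * F.subst φ ^ (d + 1) := by rw [mul_pow, pow_succ]; ring
    _ = subst φ (1 + X * F ^ (d + 1)) := by
      simp only [← coe_substAlgHom hφ, map_add, map_one, map_mul, map_pow, substAlgHom_X]

end FussCatalan

section Coefficients

variable {R : Type*} [CommSemiring R] {f : R⟦X⟧} {z : R} {p : ℕ}

lemma coeff_zero_of_eq_one_add (hfp : f = 1 + C z * X * f ^ p) : coeff 0 f = 1 := by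
  rw [hfp]
  simp

lemma coeff_succ_of_eq_one_add (hfp : f = 1 + C z * X * f ^ p) (n : ℕ) :
    coeff (n + 1) f = z * coeff n (f ^ p) := by
  conv_lhs => rw [hfp]
  rw [map_add, coeff_one, if_neg n.succ_ne_zero, zero_add, mul_assoc, coeff_C_mul,
    coeff_succ_X_mul]

end Coefficients

section PartialSums

variable {R : Type*} [CommSemiring R] [PartialOrder R] [IsOrderedRing R] {f g : R⟦X⟧}

lemma coeff_pow_nonneg (hf : ∀ n, 0 ≤ coeff n f) (p n : ℕ) : 0 ≤ coeff n (f ^ p) := by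
  rw [coeff_pow]
  exact sum_nonneg fun _ _ => prod_nonneg fun _ _ => hf _

lemma sum_range_coeff_mul_le (hf : ∀ n, 0 ≤ coeff n f) (hg : ∀ n, 0 ≤ coeff n g) (N : ℕ) :
    ∑ n ∈ range N, coeff n (f * g) ≤
      (∑ n ∈ range N, coeff n f) * ∑ n ∈ range N, coeff n g := by
  have coeff_mul_eq : ∀ n ∈ range N, coeff n (f * g) =
      ∑ q ∈ range N ×ˢ range N with q.1 + q.2 = n, coeff q.1 f * coeff q.2 g := by
    intro n hn
    rw [mem_range] at hn
    rw [coeff_mul]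
    refine sum_congr (ext fun q => ?_) fun _ _ => rfl
    simp only [HasAntidiagonal.mem_antidiagonal, mem_filter, mem_product, mem_range]
    omega
  rw [sum_congr rfl coeff_mul_eq, sum_mul_sum, ← sum_product']
  exact sum_fiberwise_le_sum_of_sum_fiber_nonneg fun _ _ =>
    sum_nonneg fun q _ => mul_nonneg (hf q.1) (hg q.2)

lemma sum_range_coeff_pow_le (hf : ∀ n, 0 ≤ coeff n f) (p N : ℕ) :
    ∑ n ∈ range N, coeff n (f ^ p) ≤ (∑ n ∈ range N, coeff n f) ^ p := by
  induction p with
  | zero =>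
    simp only [pow_zero, coeff_one]
    rw [sum_ite_eq']
    split_ifs <;> simp
  | succ p ih =>
    rw [pow_succ, pow_succ]
    calc _ ≤ _ := sum_range_coeff_mul_le (coeff_pow_nonneg hf p) hf N
      _ ≤ _ := mul_le_mul_of_nonneg_right ih (sum_nonneg fun n _ => hf n)

lemma sum_range_coeff_le_of_eq_one_add {z s : R} {p : ℕ} (hf : ∀ n, 0 ≤ coeff n f)
    (hfp : f = 1 + C z * X * f ^ p) (hz : 0 ≤ z) (hs₀ : 0 ≤ s) (hs : 1 + z * s ^ p ≤ s) (N : ℕ) :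
    ∑ n ∈ range N, coeff n f ≤ s := by
  induction N with
  | zero => simpa using hs₀
  | succ N ih =>
    calc ∑ n ∈ range (N + 1), coeff n f = 1 + z * ∑ n ∈ range N, coeff n (f ^ p) := by
          rw [sum_range_succ', coeff_zero_of_eq_one_add hfp, mul_sum, add_comm]
          simp only [coeff_succ_of_eq_one_add hfp]
      _ ≤ 1 + z * (∑ n ∈ range N, coeff n f) ^ p := by
          gcongr
          exact sum_range_coeff_pow_le hf p N
      _ ≤ 1 + z * s ^ p := by
          gcongr
          exact sum_nonneg fun n _ => hf n
      _ ≤ s := hs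

end PartialSums

section Sums

variable {R : Type*} [NormedCommRing R] {f g : R⟦X⟧}

lemma summable_norm_coeff_mul (hf : Summable fun n => ‖coeff n f‖)
    (hg : Summable fun n => ‖coeff n g‖) : Summable fun n => ‖coeff n (f * g)‖ := by
  simp only [coeff_mul]
  exact summable_norm_sum_mul_antidiagonal_of_summable_norm (f := fun n => coeff n f)
    (g := fun n => coeff n g) hf hg

lemma summable_norm_coeff_pow (hf : Summable fun n => ‖coeff n f‖) (p : ℕ) :
    Summable fun n => ‖coeff n (f ^ p)‖ := by
  induction p with
  | zero =>
    refine summable_of_ne_finset_zero (s := {0}) fun n hn => ?_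
    rw [pow_zero, coeff_one, if_neg (by simpa using hn), norm_zero]
  | succ p ih => simpa only [pow_succ] using summable_norm_coeff_mul ih hf

variable [CompleteSpace R]

lemma tsum_coeff_pow (hf : Summable fun n => ‖coeff n f‖) (p : ℕ) :
    ∑' n, coeff n (f ^ p) = (∑' n, coeff n f) ^ p := by
  induction p with
  | zero => simp [coeff_one]
  | succ p ih =>
    rw [pow_succ (∑' n, coeff n f), ← ih,
      tsum_mul_tsum_eq_tsum_sum_antidiagonal_of_summable_norm (summable_norm_coeff_pow hf p) hf]
    simp only [pow_succ, coeff_mul]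

lemma tsum_coeff_eq_of_eq_one_add {z : R} {p : ℕ} (hf : Summable fun n => ‖coeff n f‖)
    (hfp : f = 1 + C z * X * f ^ p) :
    ∑' n, coeff n f = 1 + z * (∑' n, coeff n f) ^ p := by
  calc ∑' n, coeff n f = 1 + ∑' n, z * coeff n (f ^ p) := by
        rw [hf.of_norm.tsum_eq_zero_add, coeff_zero_of_eq_one_add hfp]
        simp only [coeff_succ_of_eq_one_add hfp]
    _ = 1 + z * (∑' n, coeff n f) ^ p := by
        rw [(summable_norm_coeff_pow hf p).of_norm.tsum_mul_left, tsum_coeff_pow hf]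

end Sums

lemma eq_of_le_of_eq_one_add_mul_pow {d : ℕ} (hd : d ≠ 0) {z s s₀ : ℝ} (hz : 0 ≤ z) (hs : 0 ≤ s)
    (hle : s ≤ s₀) (hs₀ : d * s₀ ≤ d + 1) (h : s = 1 + z * s ^ (d + 1))
    (h₀ : s₀ = 1 + z * s₀ ^ (d + 1)) : s = s₀ := by
  rcases hz.eq_or_lt with rfl | hz
  · rw [h, h₀, zero_mul, zero_mul]
  by_contra hne
  have hlt : s < s₀ := lt_of_le_of_ne hle hne
  have s₀_pos : 0 < s₀ := hs.trans_lt hlt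
  obtain ⟨a, rfl⟩ : ∃ a, s = (1 + a) * s₀ := ⟨s / s₀ - 1, by field_simp; ring⟩
  have ha_neg : a < 0 := by nlinarith
  have ha : -1 ≤ a := by linarith [nonneg_of_mul_nonneg_left hs s₀_pos]
  have bernoulli : 1 + (d + 1) * a < (1 + a) ^ (d + 1) := by
    have := one_add_mul_self_lt_rpow_one_add ha ha_neg.ne
      (p := (d + 1 : ℕ)) (by exact_mod_cast Nat.succ_lt_succ (Nat.pos_of_ne_zero hd))
    rwa [Real.rpow_natCast, Nat.cast_add_one] at this
  have s₀_sub_one_pos : 0 < s₀ - 1 := by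
    rw [sub_eq_of_eq_add' h₀]
    positivity
  have scaled : a * s₀ + (s₀ - 1) = (s₀ - 1) * (1 + a) ^ (d + 1) := by
    rw [mul_pow] at h
    linear_combination h - (1 + a) ^ (d + 1) * h₀
  have : (s₀ - 1) * (1 + (d + 1) * a) < a * s₀ + (s₀ - 1) := by
    rw [scaled]
    gcongr
  linarith [mul_nonneg_of_nonpos_of_nonpos ha_neg.le (sub_nonpos.mpr hs₀)]

lemma hasSum_coeff_of_eq_one_add {f : ℝ⟦X⟧} {d : ℕ} (hd : d ≠ 0) {z s : ℝ}
    (hf : ∀ n, 0 ≤ coeff n f) (hfp : f = 1 + C z * X * f ^ (d + 1)) (hz : 0 ≤ z) (hs₀ : 0 ≤ s)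
    (hs : d * s ≤ d + 1) (root : s = 1 + z * s ^ (d + 1)) :
    HasSum (fun n => coeff n f) s := by
  have sum_range_le := sum_range_coeff_le_of_eq_one_add hf hfp hz hs₀ root.ge
  have summable : Summable fun n => coeff n f := summable_of_sum_range_le hf sum_range_le
  have tsum_eq : ∑' n, coeff n f = s :=
    eq_of_le_of_eq_one_add_mul_pow hd hz (tsum_nonneg hf)
      (summable.tsum_le_of_sum_range_le sum_range_le) hs
      (tsum_coeff_eq_of_eq_one_add summable.norm hfp) root
  exact tsum_eq ▸ summable.hasSum

theorem fussCatalan4_critical_value_general {d : ℕ} (hd : d ≠ 0) {t : ℝ} (ht₀ : 0 ≤ t)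
    (ht : (d + 1) * t ≤ 1) :
    HasSum (fun n => fussCatalan (d + 1) n * (t * (1 - t) ^ d) ^ n) (1 - t)⁻¹ := by
  have one_sub_t_pos : 0 < 1 - t := by
    have : (1 : ℝ) ≤ d := mod_cast Nat.one_le_iff_ne_zero.mpr hd
    nlinarith
  set z := t * (1 - t) ^ d with hz
  have z_nonneg : 0 ≤ z := by positivity
  have root : (1 - t)⁻¹ = 1 + z * (1 - t)⁻¹ ^ (d + 1) := by
    rw [hz, inv_pow, pow_succ]
    field_simp
    ring
  let f : ℝ⟦X⟧ := rescale z (fussCatalanSeries (d + 1))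
  have coeff_f (n : ℕ) : coeff n f = fussCatalan (d + 1) n * z ^ n := by
    rw [coeff_rescale, fussCatalanSeries, coeff_mk, mul_comm]
  have f_eq : f = 1 + C z * X * f ^ (d + 1) := by
    have := congrArg (rescale z) (fussCatalanSeries_eq_one_add d)
    rwa [map_add, map_one, map_mul, map_pow, rescale_X] at this
  simp only [← coeff_f]
  refine hasSum_coeff_of_eq_one_add hd (fun n => ?_) f_eq z_nonneg
    (inv_nonneg.mpr one_sub_t_pos.le) ?_ root
  · rw [coeff_f]
    exact mul_nonneg (fussCatalan_nonneg _ _) (pow_nonneg z_nonneg n)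
  · rw [← div_eq_mul_inv, div_le_iff₀ one_sub_t_pos]
    linarith

theorem fussCatalan4_critical_value :
    Summable (fun n : ℕ => fussCatalan4 n * (27 / 256 : ℝ) ^ n) ∧
    ∑' n : ℕ, fussCatalan4 n * (27 / 256 : ℝ) ^ n = 4 / 3 := by
  have h : HasSum (fun n : ℕ => fussCatalan4 n * (27 / 256 : ℝ) ^ n) (4 / 3) := by
    convert fussCatalan4_critical_value_general (d := 3) (t := 1 / 4) (by norm_num) (by norm_num)
      (by norm_num) using 1
    · ext n
      rw [fussCatalan_four]
      norm_num
    · norm_num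
  exact ⟨h.summable, h.tsum_eq⟩
end

section
/- Let d ≥ 1 be a natural number and let ε be a real number with d/2 < ε < d. Then the function (x,y) ↦ (1+‖x‖²)^{−ε}·(1+‖y‖²)^{−ε}·(‖x‖·‖y‖·‖x−y‖)^{ε−d} is Lebesgue integrable on ℝ^d × ℝ^d and ∫_{ℝ^d}∫_{ℝ^d} (1+‖x‖²)^{−ε}(1+‖y‖²)^{−ε}(‖x‖·‖y‖·‖x−y‖)^{ε−d} dx dy = π^d·Γ(ε/2)³·Γ((3ε−d)/2)/(Γ(d/2)·Γ(ε)³). (This is the regularized trace of the spin-zero conformal partial wave, i.e. the integral of a product of three two-point structures over the sphere, written in stereographic coordinates.) -/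
open Real MeasureTheory

/-!
The integrand is the product of the three two-point functions between the points `0`, `x`, `y` of a
sphere, in stereographic coordinates. Inverting `x` and `y` moves the base point `0` to infinity:
the powers of `‖x‖` and `‖y‖` cancel against the Jacobian, and what is left is the integral of
`(1 + ‖x‖²) ^ (-a) * (1 + ‖y‖²) ^ (-b) * ‖x - y‖ ^ (-2c)`, a two-loop vacuum diagram. Each factor is
a Laplace transform (Schwinger parametrization), so by Tonelli the integral over `x` and `y` becomes
Gaussian, and the remaining integrals over the Schwinger parameters are Beta integrals.
-/

section

open Module Set EuclideanGeometry

/-- The measure `s ^ (a - 1) / Γ(a) ds` on the half-line `s > 0`, whose Laplace transform is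
`r ↦ r ^ (-a)`. Integrating `exp (-(r * s))` against it is the Schwinger parametrization of a
propagator `r ^ (-a)`. -/
noncomputable def schwingerMeasure (a : ℝ) : Measure ℝ :=
  (volume.restrict (Ioi 0)).withDensity fun s ↦ ENNReal.ofReal (s ^ (a - 1) / Gamma a)

namespace schwingerMeasure

instance (a : ℝ) : SFinite (schwingerMeasure a) := by
  unfold schwingerMeasure
  infer_instance

lemma ae_pos (a : ℝ) : ∀ᵐ s ∂schwingerMeasure a, 0 < s :=
  (withDensity_absolutelyContinuous _ _).ae_le (ae_restrict_mem measurableSet_Ioi)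

lemma ae_pos_prod (a b : ℝ) :
    ∀ᵐ p ∂(schwingerMeasure a).prod (schwingerMeasure b), 0 < p.1 ∧ 0 < p.2 :=
  (Measure.quasiMeasurePreserving_fst.ae (ae_pos a)).and
    (Measure.quasiMeasurePreserving_snd.ae (ae_pos b))

lemma lintegral_eq_setLIntegral (a : ℝ) (f : ℝ → ENNReal) :
    ∫⁻ s, f s ∂schwingerMeasure a =
      ∫⁻ s in Ioi 0, ENNReal.ofReal (s ^ (a - 1) / Gamma a) * f s :=
  lintegral_withDensity_eq_lintegral_mul_non_measurable _ (by fun_prop)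
    (.of_forall fun _ ↦ ENNReal.ofReal_lt_top) f

lemma lintegral_rpow_sub_mul {a b : ℝ} (ha : 0 < a) (hb : 0 < b) (f : ℝ → ENNReal) :
    ∫⁻ s, ENNReal.ofReal (s ^ (b - a)) * f s ∂schwingerMeasure a =
      ENNReal.ofReal (Gamma b / Gamma a) * ∫⁻ s, f s ∂schwingerMeasure b := by
  rw [lintegral_eq_setLIntegral, lintegral_eq_setLIntegral,
    ← lintegral_const_mul' _ _ ENNReal.ofReal_ne_top]
  refine setLIntegral_congr_fun measurableSet_Ioi fun s (hs : 0 < s) ↦ ?_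
  rw [← mul_assoc, ← mul_assoc, ← ENNReal.ofReal_mul (by positivity),
    ← ENNReal.ofReal_mul (by positivity)]
  congr 2
  rw [show b - 1 = (a - 1) + (b - a) by ring, rpow_add hs]
  field_simp

lemma lintegral_exp_neg_mul {a r : ℝ} (ha : 0 < a) (hr : 0 < r) :
    ∫⁻ s, ENNReal.ofReal (exp (-(r * s))) ∂schwingerMeasure a = ENNReal.ofReal (r ^ (-a)) := by
  have laplace : ∫ s in Ioi 0, s ^ (a - 1) * exp (-(r * s)) / Gamma a = r ^ (-a) := by
    rw [integral_div, integral_rpow_mul_exp_neg_mul_Ioi ha hr, one_div, inv_rpow hr.le,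
      rpow_neg hr.le, mul_div_cancel_right₀ _ (Gamma_pos_of_pos ha).ne']
  have nonneg : ∀ᵐ s ∂volume.restrict (Ioi 0), 0 ≤ s ^ (a - 1) * exp (-(r * s)) / Gamma a :=
    (ae_restrict_mem measurableSet_Ioi).mono fun s (hs : 0 < s) ↦ by positivity
  rw [lintegral_eq_setLIntegral, ← laplace, ofReal_integral_eq_lintegral_ofReal
    (.of_integral_ne_zero (by rw [laplace]; positivity)) nonneg]
  refine setLIntegral_congr_fun measurableSet_Ioi fun s (hs : 0 < s) ↦ ?_
  rw [← ENNReal.ofReal_mul (by positivity), div_mul_eq_mul_div]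

lemma lintegral_exp_neg_mul_mul_rpow {a b k : ℝ} (ha : 0 < a) (hb : 0 < b) (hk : 0 < k) :
    ∫⁻ s, ENNReal.ofReal (exp (-(k * s)) * s ^ (b - a)) ∂schwingerMeasure a =
      ENNReal.ofReal (Gamma b / Gamma a * k ^ (-b)) := by
  simp_rw [mul_comm (exp _), ENNReal.ofReal_mul' (exp_pos _).le]
  rw [lintegral_rpow_sub_mul ha hb, lintegral_exp_neg_mul hb hk,
    ← ENNReal.ofReal_mul (by positivity)]

lemma lintegral_add_mul_rpow_neg {a b k l : ℝ} (ha : 0 < a) (hab : a < b)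
    (hk : 0 < k) (hl : 0 < l) :
    ∫⁻ u, ENNReal.ofReal ((k + l * u) ^ (-b)) ∂schwingerMeasure a =
      ENNReal.ofReal (Gamma (b - a) / Gamma b * k ^ (a - b) * l ^ (-a)) := by
  have hb : 0 < b := ha.trans hab
  have hba : 0 < b - a := sub_pos.2 hab
  calc
    _ = ∫⁻ u, ∫⁻ v, ENNReal.ofReal (exp (-((k + l * u) * v)))
          ∂schwingerMeasure b ∂schwingerMeasure a :=
      lintegral_congr_ae <| (ae_pos a).mono fun u hu ↦
        (lintegral_exp_neg_mul hb (by positivity)).symm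
    _ = ∫⁻ v, ∫⁻ u, ENNReal.ofReal (exp (-(k * v))) * ENNReal.ofReal (exp (-(l * v * u)))
          ∂schwingerMeasure a ∂schwingerMeasure b := by
      rw [lintegral_lintegral_swap (by fun_prop)]
      congr! with v u
      rw [← ENNReal.ofReal_mul (exp_pos _).le, ← exp_add]
      congr 2
      ring
    _ = ∫⁻ v, ENNReal.ofReal (l ^ (-a)) * ENNReal.ofReal (exp (-(k * v)) * v ^ (b - a - b))
          ∂schwingerMeasure b := by
      refine lintegral_congr_ae ?_
      filter_upwards [ae_pos b] with v hv
      rw [lintegral_const_mul _ (by fun_prop), lintegral_exp_neg_mul ha (by positivity),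
        mul_rpow hl.le hv.le, ← ENNReal.ofReal_mul (by positivity),
        ← ENNReal.ofReal_mul (by positivity), show b - a - b = -a by ring, mul_left_comm]
    _ = _ := by
      rw [lintegral_const_mul' _ _ ENNReal.ofReal_ne_top,
        lintegral_exp_neg_mul_mul_rpow hb hba hk, ← ENNReal.ofReal_mul (by positivity), neg_sub,
        mul_comm]

lemma lintegral_prod_exp_neg_add_mul_rpow_neg {a b c : ℝ} (ha : 0 < a) (hb : 0 < b)
    (hc : 0 < c) (hcab : c < a + b) :
    ∫⁻ p, ENNReal.ofReal (exp (-(p.1 + p.2)) * (p.1 + p.2) ^ (-c))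
        ∂(schwingerMeasure a).prod (schwingerMeasure b) =
      ENNReal.ofReal (Gamma (a + b - c) / Gamma (a + b)) := by
  calc
    _ = ∫⁻ p, ∫⁻ u, ENNReal.ofReal (exp (-((1 + u) * (p.1 + p.2)))) ∂schwingerMeasure c
          ∂(schwingerMeasure a).prod (schwingerMeasure b) := by
      refine lintegral_congr_ae ?_
      filter_upwards [ae_pos_prod a b] with p ⟨hs, ht⟩
      rw [ENNReal.ofReal_mul (exp_pos _).le, ← lintegral_exp_neg_mul hc (add_pos hs ht),
        ← lintegral_const_mul _ (by fun_prop)]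
      simp_rw [← ENNReal.ofReal_mul (exp_pos _).le, ← exp_add]
      congr! 4
      ring
    _ = ∫⁻ u, (∫⁻ s, ENNReal.ofReal (exp (-((1 + u) * s))) ∂schwingerMeasure a) *
          ∫⁻ t, ENNReal.ofReal (exp (-((1 + u) * t))) ∂schwingerMeasure b
            ∂schwingerMeasure c := by
      rw [lintegral_lintegral_swap (by fun_prop)]
      simp_rw [mul_add, neg_add, exp_add, ENNReal.ofReal_mul (exp_pos _).le]
      congr! with u
      exact lintegral_prod_mul (f := fun s ↦ ENNReal.ofReal (exp (-((1 + u) * s))))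
        (g := fun t ↦ ENNReal.ofReal (exp (-((1 + u) * t)))) (by fun_prop) (by fun_prop)
    _ = ∫⁻ u, ENNReal.ofReal ((1 + 1 * u) ^ (-(a + b))) ∂schwingerMeasure c := by
      refine lintegral_congr_ae ?_
      filter_upwards [ae_pos c] with u hu
      have hu' : 0 < 1 + u := by positivity
      rw [lintegral_exp_neg_mul ha hu', lintegral_exp_neg_mul hb hu',
        ← ENNReal.ofReal_mul (by positivity), ← rpow_add hu', one_mul, neg_add]
    _ = _ := by
      rw [lintegral_add_mul_rpow_neg hc hcab one_pos one_pos]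
      simp only [one_rpow, mul_one]

lemma lintegral_prod_rpow_sub_mul {a b a' b' : ℝ} (ha : 0 < a) (hb : 0 < b) (ha' : 0 < a')
    (hb' : 0 < b') {f : ℝ × ℝ → ENNReal} (hf : Measurable f) :
    ∫⁻ p, ENNReal.ofReal (p.1 ^ (a' - a)) * (ENNReal.ofReal (p.2 ^ (b' - b)) * f p)
        ∂(schwingerMeasure a).prod (schwingerMeasure b) =
      ENNReal.ofReal (Gamma a' / Gamma a * (Gamma b' / Gamma b)) *
        ∫⁻ p, f p ∂(schwingerMeasure a').prod (schwingerMeasure b') := by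
  rw [lintegral_prod _ (by fun_prop), lintegral_prod _ hf.aemeasurable]
  simp_rw [lintegral_const_mul' _ _ ENNReal.ofReal_ne_top, lintegral_rpow_sub_mul hb hb',
    mul_left_comm _ (ENNReal.ofReal (Gamma b' / Gamma b)),
    lintegral_const_mul' _ _ ENNReal.ofReal_ne_top]
  rw [lintegral_rpow_sub_mul ha ha', ← mul_assoc, ← ENNReal.ofReal_mul (by positivity),
    mul_comm (Gamma b' / _)]

/- `s * t + (s + t) * u` is the determinant of the quadratic form `s x² + t y² + u (x - y)²`, the
first Symanzik polynomial of the two-loop vacuum diagram. -/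
lemma lintegral_exp_neg_mul_symanzik_rpow_neg {a b c D : ℝ} (hc : 0 < c) (hcD : c < D)
    (hac : D < a + c) (hbc : D < b + c) (habc : 2 * D < a + b + c) :
    ∫⁻ p, ENNReal.ofReal (exp (-(p.1.1 + p.1.2)) *
        (p.1.1 * p.1.2 + (p.1.1 + p.1.2) * p.2) ^ (-D))
        ∂((schwingerMeasure a).prod (schwingerMeasure b)).prod (schwingerMeasure c) =
      ENNReal.ofReal (Gamma (D - c) * Gamma (a + c - D) * Gamma (b + c - D) *
        Gamma (a + b + c - 2 * D) /
          (Gamma D * Gamma a * Gamma b * Gamma (a + b + 2 * c - 2 * D))) := by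
  have ha : 0 < a := by linarith
  have hb : 0 < b := by linarith
  have hD : 0 < D := hc.trans hcD
  have hDc : 0 < D - c := sub_pos.2 hcD
  have ha' : 0 < a + c - D := sub_pos.2 hac
  have hb' : 0 < b + c - D := sub_pos.2 hbc
  calc
    _ = ∫⁻ p, ENNReal.ofReal (Gamma (D - c) / Gamma D) *
          (ENNReal.ofReal (p.1 ^ (a + c - D - a)) * (ENNReal.ofReal (p.2 ^ (b + c - D - b)) *
            ENNReal.ofReal (exp (-(p.1 + p.2)) * (p.1 + p.2) ^ (-c))))
          ∂(schwingerMeasure a).prod (schwingerMeasure b) := by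
      rw [lintegral_prod _ (by fun_prop)]
      refine lintegral_congr_ae ?_
      filter_upwards [ae_pos_prod a b] with p ⟨hs, ht⟩
      have hst : 0 < p.1 + p.2 := add_pos hs ht
      simp_rw [ENNReal.ofReal_mul (exp_pos (-(p.1 + p.2))).le]
      rw [lintegral_const_mul' _ _ ENNReal.ofReal_ne_top,
        lintegral_add_mul_rpow_neg hc hcD (by positivity) hst, mul_rpow hs.le ht.le]
      repeat rw [← ENNReal.ofReal_mul (by positivity)]
      rw [show a + c - D - a = c - D by ring, show b + c - D - b = c - D by ring]
      congr 1
      ring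
    _ = ENNReal.ofReal (Gamma (D - c) / Gamma D) *
          (ENNReal.ofReal (Gamma (a + c - D) / Gamma a * (Gamma (b + c - D) / Gamma b)) *
            ENNReal.ofReal (Gamma (a + c - D + (b + c - D) - c) /
              Gamma (a + c - D + (b + c - D)))) := by
      rw [lintegral_const_mul' _ _ ENNReal.ofReal_ne_top,
        lintegral_prod_rpow_sub_mul ha hb ha' hb' (by fun_prop),
        lintegral_prod_exp_neg_add_mul_rpow_neg ha' hb' hc (by linarith)]
    _ = _ := by
      rw [← ENNReal.ofReal_mul (by positivity), ← ENNReal.ofReal_mul (by positivity),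
        show a + c - D + (b + c - D) - c = a + b + c - 2 * D by ring,
        show a + c - D + (b + c - D) = a + b + 2 * c - 2 * D by ring]
      congr 1
      field_simp

lemma lintegral_prod_prod_exp_neg {a b c : ℝ} (ha : 0 < a) (hb : 0 < b) (hc : 0 < c)
    {r₁ r₂ r₃ : ℝ} (h₁ : 0 < r₁) (h₂ : 0 < r₂) (h₃ : 0 < r₃) :
    ∫⁻ p, ENNReal.ofReal (exp (-(r₁ * p.1.1 + r₂ * p.1.2 + r₃ * p.2)))
        ∂((schwingerMeasure a).prod (schwingerMeasure b)).prod (schwingerMeasure c) =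
      ENNReal.ofReal (r₁ ^ (-a) * r₂ ^ (-b) * r₃ ^ (-c)) := by
  simp_rw [neg_add, exp_add, ENNReal.ofReal_mul' (exp_pos _).le]
  rw [lintegral_prod_mul
      (f := fun p : ℝ × ℝ ↦ ENNReal.ofReal (exp (-(r₁ * p.1))) * ENNReal.ofReal (exp (-(r₂ * p.2))))
      (g := fun u ↦ ENNReal.ofReal (exp (-(r₃ * u)))) (by fun_prop) (by fun_prop),
    lintegral_prod_mul (f := fun s ↦ ENNReal.ofReal (exp (-(r₁ * s))))
      (g := fun t ↦ ENNReal.ofReal (exp (-(r₂ * t)))) (by fun_prop) (by fun_prop),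
    lintegral_exp_neg_mul ha h₁, lintegral_exp_neg_mul hb h₂, lintegral_exp_neg_mul hc h₃,
    ENNReal.ofReal_mul (by positivity), ENNReal.ofReal_mul (by positivity)]

end schwingerMeasure

lemma one_add_inv_rpow_neg {r : ℝ} (hr : 0 < r) (a : ℝ) :
    (1 + r⁻¹) ^ (-a) = r ^ a * (1 + r) ^ (-a) := by
  rw [show 1 + r⁻¹ = r⁻¹ * (1 + r) by field_simp; ring, mul_rpow (by positivity) (by positivity),
    rpow_neg (inv_pos.2 hr).le, inv_rpow hr.le, inv_inv]

variable {E : Type*} [NormedAddCommGroup E] [InnerProductSpace ℝ E]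

/-- The product of the two-point functions `|0 - x|^(-2α)`, `|0 - y|^(-2β)`, `|x - y|^(-2γ)` on the
unit sphere, times the round volume densities at `x` and `y`, in stereographic coordinates. The
squared chordal distance of `x` and `y` is `4 ‖x - y‖² / ((1 + ‖x‖²) (1 + ‖y‖²))` and the round
volume is `(2 / (1 + ‖x‖²)) ^ finrank ℝ E dx`; the powers of `2` are dropped. -/
noncomputable def threePointKernel (α β γ : ℝ) (x y : E) : ℝ :=
  (1 + ‖x‖ ^ 2) ^ (-(finrank ℝ E - α - γ)) * (1 + ‖y‖ ^ 2) ^ (-(finrank ℝ E - β - γ)) *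
    ((‖x‖ ^ 2) ^ (-α) * (‖y‖ ^ 2) ^ (-β) * (‖x - y‖ ^ 2) ^ (-γ))

lemma threePointKernel_half_sub (ε : ℝ) (x y : E) :
    threePointKernel ((finrank ℝ E - ε) / 2) ((finrank ℝ E - ε) / 2) ((finrank ℝ E - ε) / 2) x y =
      (1 + ‖x‖ ^ 2) ^ (-ε) * (1 + ‖y‖ ^ 2) ^ (-ε) *
        (‖x‖ * ‖y‖ * ‖x - y‖) ^ (ε - finrank ℝ E) := by
  have sq_rpow {r : ℝ} (hr : 0 ≤ r) :
      (r ^ 2) ^ (-((finrank ℝ E - ε) / 2)) = r ^ (ε - finrank ℝ E) := by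
    rw [← rpow_natCast_mul hr]
    congr 1
    push_cast
    ring
  rw [threePointKernel, sq_rpow (norm_nonneg _), sq_rpow (norm_nonneg _), sq_rpow (norm_nonneg _),
    mul_rpow (by positivity) (by positivity), mul_rpow (by positivity) (by positivity), sub_sub,
    add_halves, sub_sub_cancel]

lemma threePointKernel_inversion {x y : E} (hx : x ≠ 0) (hy : y ≠ 0) (α β γ : ℝ) :
    (1 / ‖x‖) ^ (2 * finrank ℝ E) * ((1 / ‖y‖) ^ (2 * finrank ℝ E) *
        threePointKernel α β γ (inversion 0 1 x) (inversion 0 1 y)) =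
      (1 + ‖x‖ ^ 2) ^ (-(finrank ℝ E - α - γ)) * (1 + ‖y‖ ^ 2) ^ (-(finrank ℝ E - β - γ)) *
        (‖x - y‖ ^ 2) ^ (-γ) := by
  have hX : 0 < ‖x‖ ^ 2 := by positivity
  have hY : 0 < ‖y‖ ^ 2 := by positivity
  have sq_norm_inversion (z : E) : ‖inversion 0 1 z‖ ^ 2 = (‖z‖ ^ 2)⁻¹ := by
    rw [← dist_zero_right, dist_inversion_center, dist_zero_right, one_pow, one_div, inv_pow]
  have sq_norm_inversion_sub :
      ‖inversion 0 1 x - inversion 0 1 y‖ ^ 2 = (‖x‖ ^ 2)⁻¹ * (‖y‖ ^ 2)⁻¹ * ‖x - y‖ ^ 2 := by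
    rw [← dist_eq_norm, dist_inversion_inversion hx hy, dist_zero_right, dist_zero_right,
      dist_eq_norm]
    field_simp
  have weights_cancel {r : ℝ} (hr : 0 < r) (δ : ℝ) :
      r⁻¹ ^ finrank ℝ E * r ^ (finrank ℝ E - δ - γ) * (r⁻¹ ^ (-δ) * r⁻¹ ^ (-γ)) = 1 := by
    simp only [inv_rpow hr.le, inv_pow, ← rpow_natCast, ← rpow_neg hr.le, ← rpow_add hr]
    rw [← rpow_zero r]
    congr 1
    ring
  simp only [threePointKernel, sq_norm_inversion, sq_norm_inversion_sub, one_div, pow_mul,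
    inv_pow _ 2, one_add_inv_rpow_neg hX, one_add_inv_rpow_neg hY]
  rw [mul_rpow (by positivity) (by positivity), mul_rpow (by positivity) (by positivity)]
  set w := (1 + ‖x‖ ^ 2) ^ (-(finrank ℝ E - α - γ)) *
    (1 + ‖y‖ ^ 2) ^ (-(finrank ℝ E - β - γ)) * (‖x - y‖ ^ 2) ^ (-γ)
  linear_combination w * (‖y‖ ^ 2)⁻¹ ^ finrank ℝ E * (‖y‖ ^ 2) ^ (finrank ℝ E - β - γ) *
    ((‖y‖ ^ 2)⁻¹ ^ (-β) * (‖y‖ ^ 2)⁻¹ ^ (-γ)) * weights_cancel hX α + w * weights_cancel hY β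

variable [FiniteDimensional ℝ E] [MeasurableSpace E] [BorelSpace E]

lemma lintegral_exp_neg_mul_sq_norm {b : ℝ} (hb : 0 < b) :
    ∫⁻ x : E, ENNReal.ofReal (exp (-(b * ‖x‖ ^ 2))) =
      ENNReal.ofReal ((π / b) ^ (finrank ℝ E / 2 : ℝ)) := by
  have gaussian : ∫ x : E, exp (-(b * ‖x‖ ^ 2)) = (π / b) ^ (finrank ℝ E / 2 : ℝ) := by
    simpa only [neg_mul] using GaussianFourier.integral_rexp_neg_mul_sq_norm (V := E) hb
  rw [← gaussian, ofReal_integral_eq_lintegral_ofReal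
    (.of_integral_ne_zero (by rw [gaussian]; positivity)) (.of_forall fun _ ↦ (exp_pos _).le)]

lemma lintegral_exp_neg_sq_norm_add_sq_norm_sub {t u : ℝ} (ht : 0 < t) (hu : 0 < u) (x : E) :
    ∫⁻ y : E, ENNReal.ofReal (exp (-(t * ‖y‖ ^ 2 + u * ‖x - y‖ ^ 2))) =
      ENNReal.ofReal ((π / (t + u)) ^ (finrank ℝ E / 2 : ℝ)) *
        ENNReal.ofReal (exp (-(t * u / (t + u) * ‖x‖ ^ 2))) := by
  have complete_square (y : E) : t * ‖y‖ ^ 2 + u * ‖x - y‖ ^ 2 =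
      (t + u) * ‖y - (u / (t + u)) • x‖ ^ 2 + t * u / (t + u) * ‖x‖ ^ 2 := by
    rw [norm_sub_sq_real, norm_sub_sq_real, norm_smul, inner_smul_right, real_inner_comm,
      norm_of_nonneg (by positivity)]
    field_simp
    ring
  simp_rw [complete_square, neg_add, exp_add, ENNReal.ofReal_mul (exp_pos _).le]
  rw [lintegral_mul_const' _ _ ENNReal.ofReal_ne_top, lintegral_sub_right_eq_self
      (fun y : E ↦ ENNReal.ofReal (exp (-((t + u) * ‖y‖ ^ 2)))),
    lintegral_exp_neg_mul_sq_norm (by positivity)]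

lemma lintegral_prod_exp_neg_sq_norm_add_sq_norm_sub {s t u : ℝ} (hs : 0 < s) (ht : 0 < t)
    (hu : 0 < u) :
    ∫⁻ z : E × E, ENNReal.ofReal
        (exp (-(s * ‖z.1‖ ^ 2 + (t * ‖z.2‖ ^ 2 + u * ‖z.1 - z.2‖ ^ 2)))) =
      ENNReal.ofReal (π ^ finrank ℝ E * (s * t + (s + t) * u) ^ (-(finrank ℝ E / 2 : ℝ))) := by
  have marginal (x : E) : ∫⁻ y : E, ENNReal.ofReal
        (exp (-(s * ‖x‖ ^ 2 + (t * ‖y‖ ^ 2 + u * ‖x - y‖ ^ 2)))) =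
      ENNReal.ofReal ((π / (t + u)) ^ (finrank ℝ E / 2 : ℝ)) *
        ENNReal.ofReal (exp (-((s + t * u / (t + u)) * ‖x‖ ^ 2))) := by
    simp_rw [neg_add (s * _), exp_add, ENNReal.ofReal_mul (exp_pos _).le]
    rw [lintegral_const_mul' _ _ ENNReal.ofReal_ne_top,
      lintegral_exp_neg_sq_norm_add_sq_norm_sub ht hu, mul_left_comm,
      ← ENNReal.ofReal_mul (exp_pos _).le, ← exp_add, ← neg_add, ← add_mul]
  have det : π / (t + u) * (π / (s + t * u / (t + u))) = π ^ 2 * (s * t + (s + t) * u)⁻¹ := by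
    field_simp
    ring
  rw [Measure.volume_eq_prod, lintegral_prod _ (by fun_prop)]
  simp_rw [marginal]
  rw [lintegral_const_mul' _ _ ENNReal.ofReal_ne_top,
    lintegral_exp_neg_mul_sq_norm (by positivity), ← ENNReal.ofReal_mul (by positivity),
    ← mul_rpow (by positivity) (by positivity), det, mul_rpow (by positivity) (by positivity),
    inv_rpow (by positivity), rpow_neg (by positivity), ← rpow_natCast_mul pi_pos.le,
    ← rpow_natCast π (finrank ℝ E)]
  congr 3
  push_cast
  ring

lemma lintegral_lintegral_one_add_sq_norm_rpow_mul_sq_norm_sub_rpow {a b c : ℝ}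
    (hc : 0 < c) (hcd : c < finrank ℝ E / 2) (hac : finrank ℝ E / 2 < a + c)
    (hbc : finrank ℝ E / 2 < b + c) (habc : finrank ℝ E < a + b + c) :
    ∫⁻ x : E, ∫⁻ y : E, ENNReal.ofReal
        ((1 + ‖x‖ ^ 2) ^ (-a) * (1 + ‖y‖ ^ 2) ^ (-b) * (‖x - y‖ ^ 2) ^ (-c)) =
      ENNReal.ofReal (π ^ finrank ℝ E * (Gamma (finrank ℝ E / 2 - c) *
        Gamma (a + c - finrank ℝ E / 2) * Gamma (b + c - finrank ℝ E / 2) *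
        Gamma (a + b + c - finrank ℝ E) /
          (Gamma (finrank ℝ E / 2) * Gamma a * Gamma b *
            Gamma (a + b + 2 * c - finrank ℝ E)))) := by
  have : Nontrivial E := nontrivial_of_finrank_pos (R := ℝ)
    (Nat.cast_pos.1 (by linarith : (0 : ℝ) < finrank ℝ E))
  have two_mul_half : (finrank ℝ E : ℝ) = 2 * (finrank ℝ E / 2) := by ring
  calc
    _ = ∫⁻ x : E, ∫⁻ y : E, ∫⁻ p, ENNReal.ofReal (exp (-((1 + ‖x‖ ^ 2) * p.1.1 +
          (1 + ‖y‖ ^ 2) * p.1.2 + ‖x - y‖ ^ 2 * p.2)))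
          ∂((schwingerMeasure a).prod (schwingerMeasure b)).prod (schwingerMeasure c) := by
      refine lintegral_congr fun x ↦ lintegral_congr_ae ?_
      filter_upwards [Measure.ae_ne volume x] with y hy
      rw [schwingerMeasure.lintegral_prod_prod_exp_neg (by linarith) (by linarith) hc
        (by positivity) (by positivity) (pow_pos (norm_pos_iff.2 (sub_ne_zero.2 hy.symm)) 2)]
    _ = ∫⁻ p, (∫⁻ z : E × E, ENNReal.ofReal (exp (-(p.1.1 + p.1.2))) * ENNReal.ofReal
          (exp (-(p.1.1 * ‖z.1‖ ^ 2 + (p.1.2 * ‖z.2‖ ^ 2 + p.2 * ‖z.1 - z.2‖ ^ 2)))))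
          ∂((schwingerMeasure a).prod (schwingerMeasure b)).prod (schwingerMeasure c) := by
      symm
      rw [lintegral_lintegral_swap (by fun_prop), Measure.volume_eq_prod,
        lintegral_prod _ (by fun_prop)]
      congr! with x y p
      rw [← ENNReal.ofReal_mul (exp_pos _).le, ← exp_add]
      congr 2
      ring
    _ = ∫⁻ p, ENNReal.ofReal (π ^ finrank ℝ E) * ENNReal.ofReal (exp (-(p.1.1 + p.1.2)) *
          (p.1.1 * p.1.2 + (p.1.1 + p.1.2) * p.2) ^ (-(finrank ℝ E / 2 : ℝ)))
          ∂((schwingerMeasure a).prod (schwingerMeasure b)).prod (schwingerMeasure c) := by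
      refine lintegral_congr_ae ?_
      filter_upwards [Measure.quasiMeasurePreserving_fst.ae (schwingerMeasure.ae_pos_prod a b),
        Measure.quasiMeasurePreserving_snd.ae (schwingerMeasure.ae_pos c)] with p ⟨hs, ht⟩ hu
      rw [lintegral_const_mul' _ _ ENNReal.ofReal_ne_top,
        lintegral_prod_exp_neg_sq_norm_add_sq_norm_sub hs ht hu,
        ← ENNReal.ofReal_mul (by positivity), ← ENNReal.ofReal_mul (by positivity), mul_left_comm]
    _ = _ := by
      rw [lintegral_const_mul' _ _ ENNReal.ofReal_ne_top,
        schwingerMeasure.lintegral_exp_neg_mul_symanzik_rpow_neg hc hcd hac hbc (by linarith),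
        ← ENNReal.ofReal_mul (by positivity), ← two_mul_half]

lemma lintegral_eq_lintegral_inversion [Nontrivial E] (c : E) {R : ℝ} (hR : R ≠ 0)
    (f : E → ENNReal) :
    ∫⁻ x, f x = ∫⁻ x, ENNReal.ofReal ((R / dist x c) ^ (2 * finrank ℝ E)) *
      f (inversion c R x) := by
  have image_compl : inversion c R '' {c}ᶜ = {c}ᶜ := by
    rw [image_compl_eq (inversion_bijective c hR), image_singleton, inversion_self]
  have abs_det (x : E) : |(((R / dist x c) ^ 2) •
      ((ℝ ∙ (x - c))ᗮ.reflection : E →L[ℝ] E)).det| = (R / dist x c) ^ (2 * finrank ℝ E) := by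
    have abs_det_reflection := congrArg abs (ℝ ∙ (x - c))ᗮ.det_reflection
    rw [abs_neg_one_pow] at abs_det_reflection
    rw [ContinuousLinearMap.det, ContinuousLinearMap.toLinearMap_smul, LinearMap.det_smul, abs_mul,
      ← pow_mul, abs_of_nonneg ((even_two_mul _).pow_nonneg _)]
    exact (congrArg _ abs_det_reflection).trans (mul_one _)
  have key := lintegral_image_eq_lintegral_abs_det_fderiv_mul volume
    (measurableSet_singleton c).compl
    (fun x hx ↦ (hasFDerivAt_inversion (R := R) hx).hasFDerivWithinAt)
    (inversion_injective c hR).injOn f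
  simpa only [image_compl, restrict_compl_singleton, abs_det] using key

lemma lintegral_lintegral_threePointKernel {α β γ : ℝ} (hγ : 0 < γ) (hγd : γ < finrank ℝ E / 2)
    (hαd : α < finrank ℝ E / 2) (hβd : β < finrank ℝ E / 2) (hαβγ : α + β + γ < finrank ℝ E) :
    ∫⁻ x : E, ∫⁻ y : E, ENNReal.ofReal (threePointKernel α β γ x y) =
      ENNReal.ofReal (π ^ finrank ℝ E * (Gamma (finrank ℝ E / 2 - α) *
        Gamma (finrank ℝ E / 2 - β) * Gamma (finrank ℝ E / 2 - γ) *
        Gamma (finrank ℝ E - α - β - γ) /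
          (Gamma (finrank ℝ E / 2) * Gamma (finrank ℝ E - α - β) *
            Gamma (finrank ℝ E - α - γ) * Gamma (finrank ℝ E - β - γ)))) := by
  have : Nontrivial E := nontrivial_of_finrank_pos (R := ℝ)
    (Nat.cast_pos.1 (by linarith : (0 : ℝ) < finrank ℝ E))
  calc
    _ = ∫⁻ x : E, ∫⁻ y : E, ENNReal.ofReal ((1 + ‖x‖ ^ 2) ^ (-(finrank ℝ E - α - γ)) *
          (1 + ‖y‖ ^ 2) ^ (-(finrank ℝ E - β - γ)) * (‖x - y‖ ^ 2) ^ (-γ)) := by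
      rw [lintegral_eq_lintegral_inversion 0 one_ne_zero]
      refine lintegral_congr_ae ?_
      filter_upwards [Measure.ae_ne volume 0] with x hx
      rw [lintegral_eq_lintegral_inversion 0 one_ne_zero,
        ← lintegral_const_mul' _ _ ENNReal.ofReal_ne_top]
      refine lintegral_congr_ae ?_
      filter_upwards [Measure.ae_ne volume 0] with y hy
      rw [← ENNReal.ofReal_mul (by positivity), ← ENNReal.ofReal_mul (by positivity),
        dist_zero_right, dist_zero_right, threePointKernel_inversion hx hy]
    _ = _ := by
      rw [lintegral_lintegral_one_add_sq_norm_rpow_mul_sq_norm_sub_rpow hγ hγd (by linarith)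
        (by linarith) (by linarith)]
      ring_nf

lemma integrable_prod_and_integral_integral_eq {X Y : Type*} [MeasurableSpace X]
    [MeasurableSpace Y] {μ : Measure X} {ν : Measure Y} [SFinite μ] [SFinite ν] {f : X × Y → ℝ}
    (hf : Measurable f) (hf₀ : 0 ≤ f) {I : ℝ} (hI : 0 ≤ I)
    (h : ∫⁻ x, ∫⁻ y, ENNReal.ofReal (f (x, y)) ∂ν ∂μ = ENNReal.ofReal I) :
    Integrable f (μ.prod ν) ∧ ∫ x, ∫ y, f (x, y) ∂ν ∂μ = I := by
  rw [← lintegral_prod (fun z ↦ ENNReal.ofReal (f z)) (by fun_prop)] at h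
  have hint : Integrable f (μ.prod ν) := by
    refine ⟨hf.aestronglyMeasurable, ?_⟩
    rw [hasFiniteIntegral_iff_ofReal (.of_forall hf₀), h]
    exact ENNReal.ofReal_lt_top
  refine ⟨hint, ?_⟩
  rw [← integral_prod f hint, integral_eq_lintegral_of_nonneg_ae (.of_forall hf₀)
    hf.aestronglyMeasurable, h, ENNReal.toReal_ofReal hI]

theorem regularized_CPW_trace_general {ε : ℝ} (hε₁ : finrank ℝ E / 3 < ε)
    (hε₂ : ε < finrank ℝ E) :
    Integrable (fun p : E × E ↦ (1 + ‖p.1‖ ^ 2) ^ (-ε) * (1 + ‖p.2‖ ^ 2) ^ (-ε) *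
      (‖p.1‖ * ‖p.2‖ * ‖p.1 - p.2‖) ^ (ε - finrank ℝ E)) ∧
    ∫ x : E, ∫ y : E, (1 + ‖x‖ ^ 2) ^ (-ε) * (1 + ‖y‖ ^ 2) ^ (-ε) *
        (‖x‖ * ‖y‖ * ‖x - y‖) ^ (ε - finrank ℝ E) =
      π ^ finrank ℝ E * Gamma (ε / 2) ^ 3 * Gamma ((3 * ε - finrank ℝ E) / 2) /
        (Gamma (finrank ℝ E / 2) * Gamma ε ^ 3) := by
  have hε : 0 < ε := (by positivity : (0 : ℝ) ≤ finrank ℝ E / 3).trans_lt hε₁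
  have h₃ε : 0 < (3 * ε - finrank ℝ E) / 2 := by linarith
  have hd : 0 < (finrank ℝ E : ℝ) / 2 := by linarith
  refine integrable_prod_and_integral_integral_eq (by fun_prop) (fun _ ↦ by positivity)
    (by positivity) ?_
  simp_rw [← threePointKernel_half_sub]
  rw [lintegral_lintegral_threePointKernel (by linarith) (by linarith) (by linarith)
      (by linarith) (by linarith),
    show finrank ℝ E - (finrank ℝ E - ε) / 2 - (finrank ℝ E - ε) / 2 = ε by ring,
    show finrank ℝ E / 2 - (finrank ℝ E - ε) / 2 = ε / 2 by ring,
    show ε - (finrank ℝ E - ε) / 2 = (3 * ε - finrank ℝ E) / 2 by ring]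
  congr 1
  ring

end

theorem regularized_CPW_trace (d : ℕ) (hd : 1 ≤ d) (ε : ℝ)
    (hε1 : (d : ℝ) / 2 < ε) (hε2 : ε < (d : ℝ)) :
    MeasureTheory.Integrable
      (fun p : EuclideanSpace ℝ (Fin d) × EuclideanSpace ℝ (Fin d) =>
        (1 + ‖p.1‖ ^ 2) ^ (-ε) * (1 + ‖p.2‖ ^ 2) ^ (-ε) *
          (‖p.1‖ * ‖p.2‖ * ‖p.1 - p.2‖) ^ (ε - (d : ℝ))) ∧
    ∫ x : EuclideanSpace ℝ (Fin d), ∫ y : EuclideanSpace ℝ (Fin d),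
        (1 + ‖x‖ ^ 2) ^ (-ε) * (1 + ‖y‖ ^ 2) ^ (-ε) *
          (‖x‖ * ‖y‖ * ‖x - y‖) ^ (ε - (d : ℝ))
      = π ^ d * Real.Gamma (ε / 2) ^ 3 * Real.Gamma ((3 * ε - d) / 2) /
          (Real.Gamma ((d : ℝ) / 2) * Real.Gamma ε ^ 3) := by
  simpa only [finrank_euclideanSpace_fin] using
    regularized_CPW_trace_general (E := EuclideanSpace ℝ (Fin d)) (ε := ε)
      (by rw [finrank_euclideanSpace_fin]; linarith) (by rwa [finrank_euclideanSpace_fin])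
end
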